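/- Let (K, v_K) be a field with a non-trivial real-valued valuation and let (L, v_L) be any field extension of K equipped with a real-valued valuation v_L extending v_K. Let K° and L° be the corresponding rings of integers, so that L° is a K°-algebra. Then the first André–Quillen homology H₁(𝕃_{L°/K°}) of the cotangent complex of K° → L° is a torsion-free L°-module, i.e. no nonzero element of H₁(𝕃_{L°/K°}) is annihilated by a nonzero element of L°. -/

import Mathlib

set_option synthInstance.maxHeartbeats 800000
set_option maxHeartbeats 1600000

noncomputable section

/-- The unit ball (ring of integers) of a real-valued additive semi-valuation. -/
def AddValuation.unitBall {A : Type*} [CommRing A] (v : AddValuation A (WithTop ℝ)) :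
    Subring A where
  carrier := {a | 0 ≤ v a}
  zero_mem' := by simp only [Set.mem_setOf_eq, AddValuation.map_zero]; exact le_top
  one_mem' := by simp only [Set.mem_setOf_eq, AddValuation.map_one]; exact le_refl _
  add_mem' := by
    intro a b ha hb
    exact le_trans (le_min ha hb) (v.map_add a b)
  mul_mem' := by
    intro a b ha hb
    simp only [Set.mem_setOf_eq, AddValuation.map_mul]
    exact add_nonneg ha hb
  neg_mem' := by
    intro a ha
    simpa only [Set.mem_setOf_eq, AddValuation.map_neg] using ha

/-- A real-valued additive valuation on a field is *non-trivial* if it does not vanish on all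
of `K^×`. -/
def AddValuation.IsNontrivial {K : Type*} [Field K] (v : AddValuation K (WithTop ℝ)) : Prop :=
  ∃ x : K, x ≠ 0 ∧ v x ≠ 0

/-!
Embed `L` into an algebraically closed field `Ω` and extend the valuation. Call an inclusion `B ⊆ E`
of subalgebras over `A = K°` admissible if `H₁(𝕃_{B/A}) → H₁(𝕃_{E/A})` is injective and `E`
inherits from `B` the torsion-freeness of these modules. If every `F° ⊆ Ω°`, `F` a subfield of `Ω`
containing `K`, is admissible, then `F = K` shows that `H₁(𝕃_{Ω°/A})` is torsion-free, and `F = L`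
embeds `H₁(𝕃_{L°/A})` into it.

Admissibility is stable under composition and directed unions, so by Zorn it is enough to enlarge
any `F ≠ Ω`. Choose `x ∉ F` algebraic over `F` of minimal degree, or any `x ∉ F` if `F` is
algebraically closed. If every `v (x - a)`, `a ∈ F`, is a value of `F`, then `F(x)°` is, up to
inverting units, the union of the rings `F°[(x - a) / b]` with `v b = v (x - a)`. Otherwise some
`v (x - a)` is not a value of `F`, distinct monomials in `x - a` have distinct values, and `F(x)°`
is, again up to inverting units, a union of rings `F°[b (x - a)]`, `F°[c / (x - a)]` or
`F°[b (x - a), c / (x - a)]`. In all cases the relations between the generators over `F°` form a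
principal ideal, and the conormal sequence gives admissibility.
-/

namespace H1CotangentTorsion

open Algebra TensorProduct

section Ideals

theorem inf_sup_span_sq_le {R : Type*} [CommRing R] (a : Ideal R) [a.IsPrime] (f : R) :
    a ⊓ (a ⊔ Ideal.span {f}) ^ 2 ≤ (a ⊔ Ideal.span {f}) * a := by
  intro y hy
  obtain ⟨hya, hy⟩ := Submodule.mem_inf.mp hy
  have hsq : (a ⊔ Ideal.span {f}) ^ 2 ≤ (a ⊔ Ideal.span {f}) * a ⊔ Ideal.span {f * f} := by
    rw [← Ideal.span_singleton_mul_span_singleton, pow_two, Ideal.mul_sup,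
      Ideal.sup_mul a _ (Ideal.span {f}), mul_comm a (Ideal.span {f})]
    exact sup_le le_sup_left (sup_le_sup_right (Ideal.mul_mono_left le_sup_right) _)
  obtain ⟨p, hp, q, hq, rfl⟩ := Submodule.mem_sup.mp (hsq hy)
  obtain ⟨c, rfl⟩ := Ideal.mem_span_singleton.mp hq
  refine add_mem hp ?_
  have hle : (a ⊔ Ideal.span {f}) * a ≤ a := Ideal.mul_le_right
  have hfc : f * (f * c) ∈ a := by
    rw [← mul_assoc]
    exact (Ideal.add_mem_iff_right a (hle hp)).mp hya
  have hfca : f * c ∈ a :=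
    (Ideal.IsPrime.mem_or_mem ‹a.IsPrime› hfc).elim (Ideal.mul_mem_right c a) id
  rw [mul_assoc]
  exact Ideal.mul_mem_mul (Ideal.mem_sup_right (Ideal.mem_span_singleton_self f)) hfca

theorem range_liftBaseChange_subtype {A : Type*} (B : Type*) [CommRing A] [CommRing B]
    [Algebra A B] (I : Ideal A) :
    LinearMap.range ((Algebra.linearMap A B ∘ₗ I.subtype).liftBaseChange B) =
      I.map (algebraMap A B) := by
  rw [LinearMap.range_liftBaseChange, LinearMap.range_comp, I.range_subtype]
  rfl

theorem liftBaseChange_subtype_injective {A : Type*} (B : Type*) [CommRing A] [CommRing B]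
    [Algebra A B] [Module.Flat A B] (I : Ideal A) :
    Function.Injective ((Algebra.linearMap A B ∘ₗ I.subtype).liftBaseChange B) := by
  have h : ((Algebra.linearMap A B ∘ₗ I.subtype).liftBaseChange B).restrictScalars A =
      (TensorProduct.rid A B).toLinearMap ∘ₗ I.subtype.lTensor B := by
    ext
    simp [Algebra.smul_def, mul_comm]
  have h' := (TensorProduct.rid A B).injective.comp
    (Module.Flat.lTensor_preserves_injective_linearMap (M := B) I.subtype I.injective_subtype)
  exact (congrArg DFunLike.coe h).symm ▸ h'

theorem mem_smul_top_of_liftBaseChange_subtype_mem {A B : Type*} [CommRing A] [CommRing B]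
    [Algebra A B] [Module.Flat A B] (I : Ideal A) (J : Ideal B) {w : B ⊗[A] I}
    (hw : (Algebra.linearMap A B ∘ₗ I.subtype).liftBaseChange B w ∈ J * I.map (algebraMap A B)) :
    w ∈ J • (⊤ : Submodule B (B ⊗[A] I)) := by
  rw [← range_liftBaseChange_subtype B I, ← Submodule.map_top, ← smul_eq_mul,
    ← Submodule.map_smul''] at hw
  obtain ⟨w', hw', h⟩ := hw
  rwa [← liftBaseChange_subtype_injective B I h]

end Ideals

section TorsionFree

theorem isTorsionFree_of_ker {C M N : Type*} [CommRing C] [AddCommGroup M] [Module C M]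
    [AddCommGroup N] [Module C N] (g : M →ₗ[C] N) [Module.IsTorsionFree C N]
    [Module.IsTorsionFree C (LinearMap.ker g)] : Module.IsTorsionFree C M := by
  refine ⟨fun r hr m n hmn => ?_⟩
  have hg : g m = g n := hr.smul_right_injective N (by simpa using congrArg g hmn)
  have hker : m - n ∈ LinearMap.ker g := by rw [LinearMap.mem_ker, map_sub, hg, sub_self]
  have : (⟨m - n, hker⟩ : LinearMap.ker g) = 0 :=
    hr.smul_right_injective _ (Subtype.ext (by simpa [smul_sub, sub_eq_zero] using hmn))
  exact sub_eq_zero.mp (congrArg Subtype.val this)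

end TorsionFree

section Extensions

variable {R S T : Type*} [CommRing R] [CommRing S] [CommRing T] [Algebra R S] [Algebra R T]
  [Algebra S T]

theorem apply_eq_zero_of_mem_ker_smul_top (P : Extension R T) {M N : Type*} [AddCommGroup M]
    [Module P.Ring M] [AddCommGroup N] [Module P.Ring N] [Module T N] [IsScalarTower P.Ring T N]
    (g : M →ₗ[P.Ring] N) {x : M} (hx : x ∈ P.ker • (⊤ : Submodule P.Ring M)) : g x = 0 := by
  refine (Submodule.smul_le (P := LinearMap.ker g)).mpr (fun f hf y _ => ?_) hx
  rw [LinearMap.mem_ker, map_smul, ← algebraMap_smul T,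
    show algebraMap P.Ring T f = 0 from hf, zero_smul]

theorem map_ker_le_ker {P : Extension R S} {P' : Extension R T} (h : P.Hom P') :
    P.ker.map h.toRingHom ≤ P'.ker := by
  refine Ideal.map_le_iff_le_comap.mpr fun x hx => ?_
  change algebraMap P'.Ring T (h.toRingHom x) = 0
  rw [h.algebraMap_toRingHom, show algebraMap P.Ring S x = 0 from hx, map_zero]

theorem liftBaseChange_cotangentMap_injective {P : Extension R S} {P' : Extension R T}
    (h : P.Hom P') (hflat : h.toRingHom.Flat)
    (hker : P.ker.map h.toRingHom ⊓ P'.ker ^ 2 ≤ P'.ker * P.ker.map h.toRingHom) :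
    Function.Injective ((Extension.Cotangent.map h).liftBaseChange T) := by
  algebraize [h.toRingHom, (algebraMap S T).comp (algebraMap P.Ring S)]
  have : IsScalarTower P.Ring P'.Ring T :=
    .of_algebraMap_eq fun x => (h.algebraMap_toRingHom x).symm
  let mk₁ : P.ker →ₗ[P.Ring] T ⊗[S] P.Cotangent :=
    (TensorProduct.mk S T P.Cotangent 1).restrictScalars P.Ring ∘ₗ Extension.Cotangent.mk
  let τ := mk₁.liftBaseChange P'.Ring
  have hτ (r : P'.Ring) (x : P.ker) :
      τ (r ⊗ₜ x) = algebraMap P'.Ring T r ⊗ₜ Extension.Cotangent.mk x := by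
    change r • ((1 : T) ⊗ₜ[S] Extension.Cotangent.mk x) = _
    rw [TensorProduct.smul_tmul', Algebra.smul_def, mul_one]
  have hτ_surj : Function.Surjective τ := fun z => by
    induction z with
    | zero => exact ⟨0, map_zero τ⟩
    | tmul t c =>
      obtain ⟨r, rfl⟩ := P'.algebraMap_surjective t
      obtain ⟨x, rfl⟩ := Extension.Cotangent.mk_surjective c
      exact ⟨r ⊗ₜ x, hτ r x⟩
    | add z₁ z₂ h₁ h₂ =>
      obtain ⟨⟨w₁, rfl⟩, w₂, rfl⟩ := And.intro h₁ h₂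
      exact ⟨w₁ + w₂, map_add τ w₁ w₂⟩
  let μ := (Algebra.linearMap P.Ring P'.Ring ∘ₗ P.ker.subtype).liftBaseChange P'.Ring
  have hμ_map (w) : μ w ∈ P.ker.map (algebraMap P.Ring P'.Ring) :=
    range_liftBaseChange_subtype P'.Ring P.ker ▸ LinearMap.mem_range_self μ w
  have hτμ (w) : (Extension.Cotangent.map h).liftBaseChange T (τ w) =
      Extension.Cotangent.mk ⟨μ w, map_ker_le_ker h (hμ_map w)⟩ := by
    induction w with
    | zero =>
      simp only [map_zero]
      exact (map_zero Extension.Cotangent.mk).symm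
    | tmul r x =>
      rw [hτ, LinearMap.liftBaseChange_tmul, Extension.Cotangent.map_mk, algebraMap_smul,
        ← map_smul]
      rfl
    | add w₁ w₂ h₁ h₂ =>
      rw [map_add, map_add, h₁, h₂, ← map_add]
      exact congrArg _ (Subtype.ext (map_add μ w₁ w₂).symm)
  rw [injective_iff_map_eq_zero]
  intro z hz
  obtain ⟨w, rfl⟩ := hτ_surj z
  rw [hτμ, Extension.Cotangent.mk_eq_zero_iff] at hz
  exact apply_eq_zero_of_mem_ker_smul_top P' τ
    (mem_smul_top_of_liftBaseChange_subtype_mem P.ker P'.ker (hker ⟨hμ_map w, hz⟩))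

theorem isTorsionFree_cotangent_of_isPrincipal [IsDomain T] (Q : Extension S T) [IsDomain Q.Ring]
    [Q.ker.IsPrincipal] : Module.IsTorsionFree T Q.Cotangent := by
  obtain ⟨f, hf : Q.ker = Ideal.span {f}⟩ := ‹Q.ker.IsPrincipal›
  refine .of_smul_eq_zero fun r m hrm => ?_
  obtain ⟨⟨x, hx⟩, rfl⟩ := Extension.Cotangent.mk_surjective m
  obtain ⟨r, rfl⟩ := Q.algebraMap_surjective r
  obtain ⟨y, rfl⟩ : f ∣ x := Ideal.mem_span_singleton.mp (hf ▸ hx)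
  refine or_iff_not_imp_left.mpr fun hr => ?_
  rw [Extension.Cotangent.mk_eq_zero_iff]
  rcases eq_or_ne f 0 with rfl | hf0
  · simp
  rw [algebraMap_smul, ← map_smul, Extension.Cotangent.mk_eq_zero_iff] at hrm
  have hsq : f * f ∣ r * (f * y) := by
    rw [← Ideal.mem_span_singleton, ← Ideal.span_singleton_mul_span_singleton, ← hf, ← pow_two]
    exact hrm
  have hry : f ∣ r * y := (mul_dvd_mul_iff_left hf0).mp (by rwa [mul_left_comm] at hsq)
  have hry' : algebraMap Q.Ring T r * algebraMap Q.Ring T y = 0 := by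
    rw [← map_mul, ← RingHom.mem_ker]
    exact (hf ▸ Ideal.mem_span_singleton.mpr hry :)
  have hy : y ∈ Q.ker := (mul_eq_zero.mp hry').resolve_left hr
  exact pow_two Q.ker ▸ Ideal.mul_mem_mul (hf ▸ Ideal.mem_span_singleton_self f) hy

end Extensions

section Generators

open MvPolynomial

universe u₁ u₂ u₃ w₁ w₂

variable {R : Type u₁} {S : Type u₂} {T : Type u₃} [CommRing R] [CommRing S] [CommRing T]
  [Algebra R S] [Algebra R T] [Algebra S T] [IsScalarTower R S T] {ι : Type w₁} {σ : Type w₂}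
  (Q : Generators S T ι) (P : Generators R S σ)

theorem flat_toComp : (Q.toComp P).toExtensionHom.toRingHom.Flat := by
  have h : (Q.toComp P).toExtensionHom.toRingHom =
      ((sumAlgEquiv R ι σ).symm : MvPolynomial ι (MvPolynomial σ R) →+* MvPolynomial (ι ⊕ σ) R).comp
        (algebraMap (MvPolynomial σ R) (MvPolynomial ι (MvPolynomial σ R))) := by
    change ((Q.toComp P).toAlgHom : P.Ring →+* (Q.comp P).Ring) = _
    rw [Generators.toComp_toAlgHom]
    refine ringHom_ext (fun x => ?_) (fun x => ?_)
    · exact (rename_C _ _).trans (sumAlgEquiv_symm_C_C R ι σ x).symm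
    · exact (rename_X _ _).trans (sumAlgEquiv_symm_C_X R ι σ x).symm
  rw [h]
  have hC : (algebraMap (MvPolynomial σ R) (MvPolynomial ι (MvPolynomial σ R))).Flat :=
    RingHom.flat_algebraMap_iff.mpr inferInstance
  exact RingHom.Flat.comp hC (.of_bijective (sumAlgEquiv R ι σ).symm.bijective)

theorem liftBaseChange_cotangentMap_toComp_injective [IsDomain S] [hQ : Q.ker.IsPrincipal] :
    Function.Injective
      ((Extension.Cotangent.map (Q.toComp P).toExtensionHom).liftBaseChange T) := by
  refine liftBaseChange_cotangentMap_injective _ (flat_toComp Q P) ?_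
  obtain ⟨f, hf : Q.ker = Ideal.span {f}⟩ := hQ
  obtain ⟨f', rfl⟩ := Q.toAlgHom_ofComp_surjective P f
  set a := RingHom.ker (Q.ofComp P).toAlgHom
  have : IsDomain Q.Ring := inferInstanceAs (IsDomain (MvPolynomial ι S))
  have : a.IsPrime := RingHom.ker_isPrime _
  have hmap : P.toExtension.ker.map (Q.toComp P).toExtensionHom.toRingHom = a :=
    Q.map_toComp_ker P
  have hker : (Q.comp P).toExtension.ker = a ⊔ Ideal.span {f'} := by
    refine (Q.ker_comp_eq_sup P).trans ?_
    rw [hf, ← Set.image_singleton, ← Ideal.map_span, Q.map_toComp_ker P,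
      Ideal.comap_map_of_surjective _ (Q.toAlgHom_ofComp_surjective P), ← RingHom.ker_eq_comap_bot,
      sup_comm (Ideal.span _), ← sup_assoc, sup_idem]
  rw [hmap, hker]
  exact inf_sup_span_sq_le a f'

theorem isTorsionFree_cotangent_iff : Module.IsTorsionFree S P.toExtension.Cotangent ↔
    Module.IsTorsionFree S (H1Cotangent R S) := by
  have e := P.equivH1Cotangent
  refine ⟨fun _ => ?_, fun _ => ?_⟩
  · exact (Extension.h1Cotangentι_injective.comp e.symm.injective).moduleIsTorsionFree
      (P.toExtension.h1Cotangentι ∘ e.symm) fun r m => by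
        simp only [Function.comp_apply, map_smul]
  · have : Module.IsTorsionFree S (LinearMap.ker P.toExtension.cotangentComplex) :=
      e.injective.moduleIsTorsionFree e (map_smul e)
    exact isTorsionFree_of_ker P.toExtension.cotangentComplex

theorem isTorsionFree_h1Cotangent_trans [IsDomain S] [IsBezout S] [IsDomain T]
    [Q.ker.IsPrincipal] [Module.IsTorsionFree S (H1Cotangent R S)] :
    Module.IsTorsionFree T (H1Cotangent R T) := by
  let P := Generators.self R S
  have : Module.IsTorsionFree S P.toExtension.Cotangent := (isTorsionFree_cotangent_iff P).mpr ‹_›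
  have : Module.Flat S P.toExtension.Cotangent := by
    rwa [Module.Flat.flat_iff_torsion_eq_bot_of_isBezout,
      ← Submodule.isTorsionFree_iff_torsion_eq_bot]
  have : Module.IsTorsionFree T (T ⊗[S] P.toExtension.Cotangent) := Module.Flat.isTorsionFree
  have : IsDomain Q.toExtension.Ring := inferInstanceAs (IsDomain (MvPolynomial ι S))
  have : Q.toExtension.ker.IsPrincipal := ‹Q.ker.IsPrincipal›
  have : Module.IsTorsionFree T Q.toExtension.Cotangent :=
    isTorsionFree_cotangent_of_isPrincipal Q.toExtension
  rw [← isTorsionFree_cotangent_iff (Q.comp P)]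
  let i := (Extension.Cotangent.map (Q.toComp P).toExtensionHom).liftBaseChange T
  let g := Extension.Cotangent.map (Q.ofComp P).toExtensionHom
  have hker : LinearMap.ker g = LinearMap.range i :=
    (Generators.Cotangent.exact Q P).linearMap_ker_eq
  let e := LinearEquiv.ofInjective i (liftBaseChange_cotangentMap_toComp_injective Q P)
  have : Module.IsTorsionFree T (LinearMap.ker g) :=
    hker ▸ e.symm.injective.moduleIsTorsionFree e.symm (map_smul e.symm)
  exact isTorsionFree_of_ker g

theorem eq_zero_of_smul_h1CotangentMap_eq_zero [IsDomain S] [Q.ker.IsPrincipal] {V : Type*}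
    [CommRing V] [Algebra S V] [Algebra T V] [IsScalarTower S T V] [Module.FaithfullyFlat S V]
    {s : T} (hs : IsUnit (algebraMap T V s)) {m : H1Cotangent R S}
    (hm : s • H1Cotangent.map R R S T m = 0) : m = 0 := by
  let P := Generators.self R S
  let i := (Extension.Cotangent.map (Q.toComp P).toExtensionHom).liftBaseChange T
  have hmap : (Q.comp P).equivH1Cotangent
      (Extension.H1Cotangent.map (Q.toComp P).toExtensionHom m) = H1Cotangent.map R R S T m := by
    change Extension.H1Cotangent.map _ (Extension.H1Cotangent.map _ m) = _
    rw [← Extension.H1Cotangent.map_comp_apply, H1Cotangent.map, Extension.H1Cotangent.map_eq]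
  have hzero : s • Extension.H1Cotangent.map (Q.toComp P).toExtensionHom m = 0 :=
    (Q.comp P).equivH1Cotangent.injective (by rw [map_smul, hmap, hm, map_zero])
  have hi : i (s ⊗ₜ m.1) = 0 := by
    rw [LinearMap.liftBaseChange_tmul]
    exact congrArg Subtype.val hzero
  have hs0 : s ⊗ₜ[S] m.1 = 0 :=
    liftBaseChange_cotangentMap_toComp_injective Q P (hi.trans (map_zero i).symm)
  have hV : algebraMap T V s ⊗ₜ[S] m.1 = 0 := by
    simpa using congrArg (LinearMap.rTensor _ (IsScalarTower.toAlgHom S T V).toLinearMap) hs0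
  have hV1 : (1 : V) ⊗ₜ[S] m.1 = 0 := by
    refine hs.smul_eq_zero.mp ?_
    rwa [TensorProduct.smul_tmul', smul_eq_mul, mul_one]
  refine Subtype.ext (Module.FaithfullyFlat.tensorProduct_mk_injective (A := S) (B := V) _ ?_)
  exact hV1.trans (map_zero _).symm

end Generators

section Subalgebras

open MvPolynomial

variable {A Ω : Type*} [CommRing A] [CommRing Ω] [Algebra A Ω] {B C D : Subalgebra A Ω}

/-- The ideal of polynomial relations over `A` between the elements of `C`, that is, the kernel of
the presentation `Generators.self A C`. It describes `H1Cotangent A C` inside `I ⧸ I ^ 2`. -/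
def relationIdeal (C : Subalgebra A Ω) : Ideal (MvPolynomial C A) :=
  RingHom.ker (aeval (R := A) (id : C → C))

theorem rename_inclusion_trans (h : B ≤ C) (h' : C ≤ D) (p : MvPolynomial B A) :
    rename (Subalgebra.inclusion (h.trans h')) p =
      rename (Subalgebra.inclusion h') (rename (Subalgebra.inclusion h) p) := by
  rw [rename_rename]
  rfl

theorem aeval_id_rename_inclusion (h : B ≤ C) (p : MvPolynomial B A) :
    aeval (id : C → C) (rename (Subalgebra.inclusion h) p) =
      Subalgebra.inclusion h (aeval (id : B → B) p) := by
  rw [aeval_rename, ← AlgHom.comp_apply, comp_aeval]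
  rfl

theorem rename_inclusion_mem_relationIdeal_iff (h : B ≤ C) {p : MvPolynomial B A} :
    rename (Subalgebra.inclusion h) p ∈ relationIdeal C ↔ p ∈ relationIdeal B := by
  rw [relationIdeal, relationIdeal, RingHom.mem_ker, RingHom.mem_ker, aeval_id_rename_inclusion,
    map_eq_zero_iff _ (Subalgebra.inclusion_injective h)]

theorem rename_inclusion_mem_relationIdeal_sq (h : B ≤ C) {p : MvPolynomial B A}
    (hp : p ∈ relationIdeal B ^ 2) :
    rename (Subalgebra.inclusion h) p ∈ relationIdeal C ^ 2 := by
  have hle : (relationIdeal B).map (rename (R := A) (Subalgebra.inclusion h)) ≤ relationIdeal C :=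
    Ideal.map_le_iff_le_comap.mpr fun _ => (rename_inclusion_mem_relationIdeal_iff h).mpr
  refine Ideal.pow_right_mono hle 2 ?_
  rw [← Ideal.map_pow]
  exact Ideal.mem_map_of_mem _ hp

theorem isTorsionFree_h1Cotangent_iff_relationIdeal [IsDomain Ω] (C : Subalgebra A Ω) :
    Module.IsTorsionFree C (H1Cotangent A C) ↔ ∀ q, ∀ p ∈ relationIdeal C,
      q * p ∈ relationIdeal C ^ 2 → q ∈ relationIdeal C ∨ p ∈ relationIdeal C ^ 2 := by
  let P := Generators.self A C
  have hmk {p} (hp : p ∈ relationIdeal C) :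
      Extension.Cotangent.mk (P := P.toExtension) ⟨p, hp⟩ = 0 ↔ p ∈ relationIdeal C ^ 2 :=
    Extension.Cotangent.mk_eq_zero_iff _
  have hsmul (q : P.toExtension.Ring) {p : P.toExtension.Ring} (hp : p ∈ relationIdeal C) :
      algebraMap P.toExtension.Ring C q • Extension.Cotangent.mk (P := P.toExtension) ⟨p, hp⟩ =
        Extension.Cotangent.mk (P := P.toExtension) ⟨q * p, Ideal.mul_mem_left _ q hp⟩ := by
    rw [algebraMap_smul, ← map_smul]
    rfl
  rw [← isTorsionFree_cotangent_iff P, Module.isTorsionFree_iff_smul_eq_zero]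
  constructor
  · intro h q p hp hqp
    exact (h _ _ ((hsmul q hp).trans ((hmk _).mpr hqp))).imp id (hmk hp).mp
  · intro h c m hcm
    obtain ⟨q, rfl⟩ := P.toExtension.algebraMap_surjective c
    obtain ⟨⟨p, hp⟩, rfl⟩ := Extension.Cotangent.mk_surjective m
    exact (h q p hp ((hmk _).mp ((hsmul q hp).symm.trans hcm))).imp id (hmk hp).mpr

/-- The map on `H1Cotangent` induced by an inclusion of subalgebras. -/
def h1Inclusion (h : B ≤ C) :
    H1Cotangent A B →ₛₗ[(Subalgebra.inclusion h : B →+* C)] H1Cotangent A C :=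
  letI := (Subalgebra.inclusion h).toRingHom.toAlgebra
  haveI : IsScalarTower A B C := .of_algebraMap_eq' (Subalgebra.inclusion h).comp_algebraMap.symm
  { H1Cotangent.map A A B C with
    map_smul' := fun b m => ((H1Cotangent.map A A B C).map_smul b m).trans
      (algebraMap_smul C b (H1Cotangent.map A A B C m)).symm }

theorem exists_forall_h1Inclusion_eq_zero_iff (m : H1Cotangent A B) :
    ∃ p : MvPolynomial B A, ∀ (C : Subalgebra A Ω) (h : B ≤ C),
      h1Inclusion h m = 0 ↔ rename (Subalgebra.inclusion h) p ∈ relationIdeal C ^ 2 := by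
  obtain ⟨m, hm⟩ := m
  obtain ⟨⟨p, hp⟩, rfl⟩ := Extension.Cotangent.mk_surjective m
  refine ⟨p, fun C h => ?_⟩
  let := (Subalgebra.inclusion h).toRingHom.toAlgebra
  have : IsScalarTower A B C := .of_algebraMap_eq' (Subalgebra.inclusion h).comp_algebraMap.symm
  let F := Generators.defaultHom (Generators.self A B) (Generators.self A C)
  have hF : F.toAlgHom = rename (Subalgebra.inclusion h) :=
    MvPolynomial.algHom_ext fun b => (aeval_X _ _).trans (rename_X _ _).symm
  rw [← hF]
  refine Subtype.ext_iff.trans ?_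
  exact Extension.Cotangent.mk_eq_zero_iff (P := (Generators.self A C).toExtension)
    ⟨F.toAlgHom p, hF ▸ (rename_inclusion_mem_relationIdeal_iff h).mpr hp⟩

theorem h1Inclusion_trans (h : B ≤ C) (h' : C ≤ D) (m : H1Cotangent A B) :
    h1Inclusion (h.trans h' : B ≤ D) m = h1Inclusion h' (h1Inclusion h m) := by
  let := (Subalgebra.inclusion h).toRingHom.toAlgebra
  have : IsScalarTower A B C := .of_algebraMap_eq' (Subalgebra.inclusion h).comp_algebraMap.symm
  let := (Subalgebra.inclusion h').toRingHom.toAlgebra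
  have : IsScalarTower A C D := .of_algebraMap_eq' (Subalgebra.inclusion h').comp_algebraMap.symm
  let := (Subalgebra.inclusion (h.trans h')).toRingHom.toAlgebra
  have : IsScalarTower A B D :=
    .of_algebraMap_eq' (Subalgebra.inclusion (h.trans h')).comp_algebraMap.symm
  have : IsScalarTower B C D := .of_algebraMap_eq' rfl
  change H1Cotangent.map A A B D m = H1Cotangent.map A A C D (H1Cotangent.map A A B C m)
  simp only [H1Cotangent.map]
  rw [← Extension.H1Cotangent.map_comp_apply, Extension.H1Cotangent.map_eq]

theorem h1Inclusion_refl (m : H1Cotangent A B) : h1Inclusion (le_refl B) m = m := by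
  change H1Cotangent.map A A B B m = m
  rw [H1Cotangent.map, Extension.H1Cotangent.map_eq _ (.id _), Extension.H1Cotangent.map_id]
  rfl

end Subalgebras

section DirectedUnions

open MvPolynomial

variable {A Ω ι : Type*} [CommRing A] [CommRing Ω] [Algebra A Ω] [Nonempty ι]
  {D : ι → Subalgebra A Ω} (hD : Directed (· ≤ ·) D)
include hD

theorem mem_iSup_subalgebra_of_directed {x : Ω} : x ∈ ⨆ i, D i ↔ ∃ i, x ∈ D i := by
  rw [← SetLike.mem_coe, Subalgebra.coe_iSup_of_directed hD, Set.mem_iUnion]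
  rfl

theorem exists_rename_inclusion_eq (q : MvPolynomial (⨆ i, D i : Subalgebra A Ω) A) :
    ∃ i, ∃ p : MvPolynomial (D i) A, rename (Subalgebra.inclusion (le_iSup D i)) p = q := by
  induction q using MvPolynomial.induction_on with
  | C a => exact ⟨Classical.arbitrary ι, C a, rename_C _ _⟩
  | add _ _ hp hq =>
    obtain ⟨i, p, rfl⟩ := hp
    obtain ⟨j, q, rfl⟩ := hq
    obtain ⟨k, hik, hjk⟩ := hD i j
    refine ⟨k, rename (Subalgebra.inclusion hik) p + rename (Subalgebra.inclusion hjk) q, ?_⟩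
    rw [map_add, ← rename_inclusion_trans, ← rename_inclusion_trans]
  | mul_X _ x hp =>
    obtain ⟨i, p, rfl⟩ := hp
    obtain ⟨j, hx⟩ := (mem_iSup_subalgebra_of_directed hD).mp x.2
    obtain ⟨k, hik, hjk⟩ := hD i j
    refine ⟨k, rename (Subalgebra.inclusion hik) p * X ⟨x, hjk hx⟩, ?_⟩
    rw [map_mul, ← rename_inclusion_trans, rename_X]
    rfl

theorem exists_mem_sq_rename_inclusion_eq {q : MvPolynomial (⨆ i, D i : Subalgebra A Ω) A}
    (hq : q ∈ relationIdeal (⨆ i, D i) ^ 2) :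
    ∃ i, ∃ p ∈ relationIdeal (D i) ^ 2, rename (Subalgebra.inclusion (le_iSup D i)) p = q := by
  rw [pow_two] at hq
  refine Submodule.mul_induction_on hq ?_ ?_
  · intro p hp q hq
    obtain ⟨i, p, rfl⟩ := exists_rename_inclusion_eq hD p
    obtain ⟨j, q, rfl⟩ := exists_rename_inclusion_eq hD q
    rw [rename_inclusion_mem_relationIdeal_iff] at hp hq
    obtain ⟨k, hik, hjk⟩ := hD i j
    refine ⟨k, rename (Subalgebra.inclusion hik) p * rename (Subalgebra.inclusion hjk) q, ?_, ?_⟩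
    · rw [pow_two]
      exact Ideal.mul_mem_mul ((rename_inclusion_mem_relationIdeal_iff hik).mpr hp)
        ((rename_inclusion_mem_relationIdeal_iff hjk).mpr hq)
    · rw [map_mul, ← rename_inclusion_trans, ← rename_inclusion_trans]
  · rintro _ _ ⟨i, p, hp, rfl⟩ ⟨j, q, hq, rfl⟩
    obtain ⟨k, hik, hjk⟩ := hD i j
    refine ⟨k, rename (Subalgebra.inclusion hik) p + rename (Subalgebra.inclusion hjk) q, ?_, ?_⟩
    · exact add_mem (rename_inclusion_mem_relationIdeal_sq hik hp)
        (rename_inclusion_mem_relationIdeal_sq hjk hq)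
    · rw [map_add, ← rename_inclusion_trans, ← rename_inclusion_trans]

theorem exists_mem_relationIdeal_sq {i : ι} {p : MvPolynomial (D i) A}
    (hp : rename (Subalgebra.inclusion (le_iSup D i)) p ∈ relationIdeal (⨆ i, D i) ^ 2) :
    ∃ j, ∃ h : D i ≤ D j, rename (Subalgebra.inclusion h) p ∈ relationIdeal (D j) ^ 2 := by
  obtain ⟨j, q, hq, hqp⟩ := exists_mem_sq_rename_inclusion_eq hD hp
  obtain ⟨k, hik, hjk⟩ := hD i j
  refine ⟨k, hik, ?_⟩
  have heq : rename (Subalgebra.inclusion hik) p = rename (Subalgebra.inclusion hjk) q := by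
    apply rename_injective _ (Subalgebra.inclusion_injective (le_iSup D k))
    rw [← rename_inclusion_trans, ← rename_inclusion_trans, hqp]
  rw [heq]
  exact rename_inclusion_mem_relationIdeal_sq hjk hq

theorem exists_h1Inclusion_eq_zero {i : ι} {m : H1Cotangent A (D i)}
    (hm : h1Inclusion (le_iSup D i) m = 0) :
    ∃ j, ∃ h : D i ≤ D j, h1Inclusion h m = 0 := by
  obtain ⟨p, hp⟩ := exists_forall_h1Inclusion_eq_zero_iff m
  obtain ⟨j, h, hj⟩ := exists_mem_relationIdeal_sq hD ((hp _ _).mp hm)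
  exact ⟨j, h, (hp _ _).mpr hj⟩

theorem isTorsionFree_h1Cotangent_iSup [IsDomain Ω]
    (hT : ∀ i, Module.IsTorsionFree (D i) (H1Cotangent A (D i))) :
    Module.IsTorsionFree (⨆ i, D i : Subalgebra A Ω)
      (H1Cotangent A (⨆ i, D i : Subalgebra A Ω)) := by
  simp only [isTorsionFree_h1Cotangent_iff_relationIdeal] at hT ⊢
  intro q p hp hqp
  obtain ⟨i, q, rfl⟩ := exists_rename_inclusion_eq hD q
  obtain ⟨j, p, rfl⟩ := exists_rename_inclusion_eq hD p
  obtain ⟨k, hik, hjk⟩ := hD i j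
  rw [rename_inclusion_trans hik (le_iSup D k), rename_inclusion_trans hjk (le_iSup D k),
    ← map_mul] at hqp
  obtain ⟨l, hkl, hl⟩ := exists_mem_relationIdeal_sq hD hqp
  rw [map_mul, ← rename_inclusion_trans, ← rename_inclusion_trans] at hl
  rw [rename_inclusion_mem_relationIdeal_iff] at hp
  rw [rename_inclusion_trans (hik.trans hkl) (le_iSup D l),
    rename_inclusion_trans (hjk.trans hkl) (le_iSup D l)]
  exact (hT l _ _ ((rename_inclusion_mem_relationIdeal_iff _).mpr hp) hl).imp
    (rename_inclusion_mem_relationIdeal_iff _).mpr (rename_inclusion_mem_relationIdeal_sq _)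

end DirectedUnions

section PrincipalKernels

open MvPolynomial

theorem exists_isPrimitive_associated_map {B k : Type*} [CommRing B] [IsDomain B]
    [NormalizedGCDMonoid B] [Field k] [Algebra B k] [IsFractionRing B k] {q : Polynomial k}
    (hq : q ≠ 0) :
    ∃ p : Polynomial B, p.IsPrimitive ∧ Associated (p.map (algebraMap B k)) q := by
  have hunit {b : B} (hb : b ≠ 0) : IsUnit (Polynomial.C (algebraMap B k b)) :=
    Polynomial.isUnit_C.mpr (isUnit_iff_ne_zero.mpr (by simpa using hb))
  let p := IsLocalization.integerNormalization (nonZeroDivisors B) q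
  obtain ⟨b, hb, hp⟩ := IsLocalization.integerNormalization_spec (nonZeroDivisors B) q
  have hp0 : p ≠ 0 := IsFractionRing.integerNormalization_eq_zero_iff.not.mpr hq
  have hmul : Polynomial.C (algebraMap B k p.content) * p.primPart.map (algebraMap B k) =
      Polynomial.C (algebraMap B k b) * q := by
    rw [← Polynomial.map_C, ← Polynomial.map_mul, ← p.eq_C_content_mul_primPart, hp,
      ← algebraMap_smul k b, Polynomial.smul_eq_C_mul]
  refine ⟨p.primPart, p.isPrimitive_primPart, ?_⟩
  have hleft := associated_unit_mul_left (p.primPart.map (algebraMap B k)) _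
    (hunit (Polynomial.content_eq_zero_iff.not.mpr hp0))
  have hright := associated_unit_mul_left q _ (hunit (nonZeroDivisors.ne_zero hb))
  exact hleft.symm.trans (hmul ▸ hright)

theorem isPrincipal_ker_polynomialAeval {B Ω : Type*} [CommRing B] [IsDomain B] [IsBezout B]
    [Field Ω] [Algebra B Ω] [FaithfulSMul B Ω] (y : Ω) :
    (RingHom.ker (Polynomial.aeval y : Polynomial B →ₐ[B] Ω)).IsPrincipal := by
  by_cases halg : IsAlgebraic B y
  swap
  · refine ⟨0, ?_⟩
    rw [Submodule.span_zero_singleton]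
    exact (RingHom.injective_iff_ker_eq_bot _).mp (transcendental_iff_injective.mp halg)
  let := FractionRing.liftAlgebra B Ω
  have := FractionRing.isScalarTower_liftAlgebra B Ω
  obtain ⟨_⟩ : Nonempty (NormalizedGCDMonoid B) := inferInstance
  have hint : IsIntegral (FractionRing B) y :=
    ((IsFractionRing.isAlgebraic_iff B (FractionRing B) Ω).mp halg).isIntegral
  obtain ⟨p, hprim, hp⟩ := exists_isPrimitive_associated_map (B := B) (minpoly.ne_zero hint)
  refine ⟨p, Ideal.ext fun g => ?_⟩
  rw [Ideal.submodule_span_eq, RingHom.mem_ker, Ideal.mem_span_singleton,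
    ← Polynomial.aeval_map_algebraMap (FractionRing B), ← minpoly.dvd_iff, ← hp.dvd_iff_dvd_left]
  exact ⟨hprim.dvd_of_fraction_map_dvd_fraction_map, Polynomial.map_dvd _⟩

theorem isPrincipal_ker_aeval_of_unique {B Ω κ : Type*} [CommRing B] [IsDomain B] [IsBezout B]
    [Field Ω] [Algebra B Ω] [FaithfulSMul B Ω] [Unique κ] (y : κ → Ω) :
    (RingHom.ker (aeval y : MvPolynomial κ B →ₐ[B] Ω)).IsPrincipal := by
  let e := MvPolynomial.uniqueAlgEquiv B κ
  have he : (aeval y).comp e.symm.toAlgHom = Polynomial.aeval (y default) :=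
    Polynomial.algHom_ext (by simp [e])
  have := isPrincipal_ker_polynomialAeval (B := B) (y default)
  refine Ideal.IsPrincipal.of_comap e.symm e.symm.surjective _ (hI := ?_)
  convert this
  rw [← he]
  rfl

theorem exists_X_mul_X_sub_C_dvd {B : Type*} [CommRing B] (d : B) (q : MvPolynomial (Fin 2) B) :
    ∃ (n : ℕ) (P : Polynomial B), X 0 * X 1 - C d ∣ X 0 ^ n * q - Polynomial.aeval (X 0) P := by
  induction q using MvPolynomial.induction_on with
  | C b => exact ⟨0, .C b, by simp [MvPolynomial.algebraMap_eq]⟩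
  | add p q hp hq =>
    obtain ⟨m, P, hP⟩ := hp
    obtain ⟨n, Q, hQ⟩ := hq
    refine ⟨m + n, .X ^ n * P + .X ^ m * Q, ?_⟩
    convert dvd_add (hP.mul_left (X 0 ^ n)) (hQ.mul_left (X 0 ^ m)) using 1
    simp only [map_add, map_mul, map_pow, Polynomial.aeval_X]
    ring
  | mul_X p i hp =>
    obtain ⟨n, P, hP⟩ := hp
    match i with
    | 0 =>
      refine ⟨n, .X * P, ?_⟩
      convert hP.mul_left (X 0) using 1
      simp only [map_mul, Polynomial.aeval_X]
      ring
    | 1 =>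
      refine ⟨n + 1, .C d * P, ?_⟩
      convert dvd_add (hP.mul_left (X 0 * X 1)) (dvd_mul_right _ (Polynomial.aeval (X 0) P)) using 1
      simp only [map_mul, Polynomial.aeval_C, MvPolynomial.algebraMap_eq]
      ring

theorem X_mul_X_sub_C_dvd_of_dvd_X_pow_mul {B : Type*} [CommRing B] [IsDomain B] {d : B}
    (hd : d ≠ 0) {q : MvPolynomial (Fin 2) B} {n : ℕ} (h : X 0 * X 1 - C d ∣ X 0 ^ n * q) :
    X 0 * X 1 - C d ∣ q := by
  obtain ⟨r, hr⟩ := h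
  have hX : ¬X 0 ∣ (X 0 * X 1 - C d : MvPolynomial (Fin 2) B) := by
    rw [dvd_sub_right (dvd_mul_right _ _)]
    rintro ⟨s, hs⟩
    exact hd (by simpa using congrArg (aeval (0 : Fin 2 → B)) hs)
  obtain ⟨s, rfl⟩ := X_prime.pow_dvd_of_dvd_mul_left n hX ⟨q, hr.symm⟩
  refine ⟨s, mul_left_cancel₀ (pow_ne_zero n (X_ne_zero 0)) ?_⟩
  rw [hr, mul_left_comm]

theorem isPrincipal_ker_aeval_pair {B Ω : Type*} [CommRing B] [IsDomain B] [CommRing Ω]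
    [Algebra B Ω] {u w : Ω} {d : B} (hd : d ≠ 0) (huw : u * w = algebraMap B Ω d)
    (hu : Transcendental B u) :
    (RingHom.ker (aeval ![u, w] : MvPolynomial (Fin 2) B →ₐ[B] Ω)).IsPrincipal := by
  have hzero : aeval ![u, w] (X 0 * X 1 - C d) = 0 := by simp [huw]
  refine ⟨X 0 * X 1 - C d, Ideal.ext fun q => ?_⟩
  rw [Ideal.submodule_span_eq, RingHom.mem_ker, Ideal.mem_span_singleton]
  refine ⟨fun hq => ?_, fun ⟨r, hr⟩ => by rw [hr, map_mul, hzero, zero_mul]⟩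
  obtain ⟨n, P, r, hr⟩ := exists_X_mul_X_sub_C_dvd d q
  have hP : Polynomial.aeval u P = 0 := by
    have h := congrArg (aeval ![u, w]) hr
    rw [map_mul, hzero, zero_mul, map_sub, map_mul, hq, mul_zero, zero_sub, neg_eq_zero,
      ← Polynomial.aeval_algHom_apply] at h
    simpa using h
  obtain rfl := (transcendental_iff.mp hu) P hP
  rw [map_zero, sub_zero] at hr
  exact X_mul_X_sub_C_dvd_of_dvd_X_pow_mul hd ⟨r, hr⟩

end PrincipalKernels

section AdmissibleExtensions

/-- An inclusion `B ≤ E` of `A`-subalgebras is admissible if it is injective on `H1Cotangent` and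
transfers torsion-freeness of `H1Cotangent` from `B` to `E`. These are the properties that survive
compositions and directed unions. -/
structure IsAdmissible {A Ω : Type*} [CommRing A] [CommRing Ω] [Algebra A Ω]
    (B E : Subalgebra A Ω) : Prop where
  le : B ≤ E
  injective : Function.Injective (h1Inclusion le)
  isTorsionFree : Module.IsTorsionFree B (H1Cotangent A B) →
    Module.IsTorsionFree E (H1Cotangent A E)

namespace IsAdmissible

variable {A Ω : Type*} [CommRing A] [CommRing Ω] [Algebra A Ω] {B C E : Subalgebra A Ω}

theorem refl (B : Subalgebra A Ω) : IsAdmissible B B where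
  le := le_rfl
  injective m n h := by rwa [h1Inclusion_refl, h1Inclusion_refl] at h
  isTorsionFree := id

theorem trans (h : IsAdmissible B C) (h' : IsAdmissible C E) : IsAdmissible B E where
  le := h.le.trans h'.le
  injective m n hmn := by
    rw [h1Inclusion_trans h.le h'.le, h1Inclusion_trans h.le h'.le] at hmn
    exact h.injective (h'.injective hmn)
  isTorsionFree := h'.isTorsionFree ∘ h.isTorsionFree

theorem iSup [IsDomain Ω] {ι : Type*} [Nonempty ι] {D : ι → Subalgebra A Ω}
    (hD : Directed (· ≤ ·) D) (h : ∀ i, IsAdmissible B (D i)) : IsAdmissible B (⨆ i, D i) where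
  le := (h (Classical.arbitrary ι)).le.trans (le_iSup D _)
  injective := by
    rw [injective_iff_map_eq_zero]
    intro m hm
    let i := Classical.arbitrary ι
    rw [h1Inclusion_trans (h i).le (le_iSup D i)] at hm
    obtain ⟨j, hij, hj⟩ := exists_h1Inclusion_eq_zero hD hm
    rw [← h1Inclusion_trans] at hj
    exact (h j).injective (hj.trans (map_zero _).symm)
  isTorsionFree hB := isTorsionFree_h1Cotangent_iSup hD fun i => (h i).isTorsionFree hB

theorem isTorsionFree_of_isTorsionFree [IsDomain Ω] (h : IsAdmissible B E)
    [Module.IsTorsionFree E (H1Cotangent A E)] : Module.IsTorsionFree B (H1Cotangent A B) := by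
  refine .of_smul_eq_zero fun b m hbm => ?_
  have hsmul : Subalgebra.inclusion h.le b • h1Inclusion h.le m = 0 := by
    rw [← map_zero (h1Inclusion h.le), ← hbm]
    exact ((h1Inclusion h.le).map_smulₛₗ b m).symm
  refine (smul_eq_zero.mp hsmul).imp (fun hb => ?_) fun hm => ?_
  · exact Subalgebra.inclusion_injective h.le (hb.trans (map_zero _).symm)
  · exact h.injective (hm.trans (map_zero _).symm)

end IsAdmissible

end AdmissibleExtensions

section Localization

variable {A Ω : Type*} [CommRing A] [Field Ω] [Algebra A Ω] {C E : Subalgebra A Ω}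

theorem isUnit_iff_inv_mem {x : E} : IsUnit x ↔ (x : Ω) ≠ 0 ∧ (x : Ω)⁻¹ ∈ E := by
  refine ⟨fun hx => ⟨(hx.map E.val).ne_zero, ?_⟩, fun ⟨h0, hx⟩ => ?_⟩
  · obtain ⟨y, hy⟩ := hx.exists_right_inv
    exact eq_inv_of_mul_eq_one_right (congrArg Subtype.val hy) ▸ y.2
  · exact IsUnit.of_mul_eq_one ⟨_, hx⟩ (Subtype.ext (mul_inv_cancel₀ h0))

variable (h : C ≤ E) (hfrac : ∀ z ∈ E, ∃ s ∈ C, s ≠ 0 ∧ s⁻¹ ∈ E ∧ z * s ∈ C)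
include h hfrac

theorem isLocalization_comap_isUnit :
    letI := (Subalgebra.inclusion h).toRingHom.toAlgebra
    IsLocalization ((IsUnit.submonoid E).comap (Subalgebra.inclusion h)) E := by
  let := (Subalgebra.inclusion h).toRingHom.toAlgebra
  refine ⟨fun s => s.2, fun z => ?_, fun hxy => ⟨1, ?_⟩⟩
  · obtain ⟨s, hs, hs0, hsE, hzs⟩ := hfrac z z.2
    exact ⟨⟨⟨_, hzs⟩, ⟨⟨s, hs⟩, isUnit_iff_inv_mem.mpr ⟨hs0, hsE⟩⟩⟩, rfl⟩
  · rw [Subalgebra.inclusion_injective h hxy]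

theorem isTorsionFree_h1Cotangent_of_fractions [Module.IsTorsionFree C (H1Cotangent A C)] :
    Module.IsTorsionFree E (H1Cotangent A E) := by
  let := (Subalgebra.inclusion h).toRingHom.toAlgebra
  have : IsScalarTower A C E := .of_algebraMap_eq' (Subalgebra.inclusion h).comp_algebraMap.symm
  let M := (IsUnit.submonoid E).comap (Subalgebra.inclusion h)
  have : IsLocalization M E := isLocalization_comap_isUnit h hfrac
  exact IsLocalizedModule.isTorsionFree (H1Cotangent.map A A C E) M

theorem exists_isUnit_smul_eq_zero {m : H1Cotangent A C} (hm : h1Inclusion h m = 0) :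
    ∃ s : C, IsUnit (Subalgebra.inclusion h s) ∧ s • m = 0 := by
  let := (Subalgebra.inclusion h).toRingHom.toAlgebra
  have : IsScalarTower A C E := .of_algebraMap_eq' (Subalgebra.inclusion h).comp_algebraMap.symm
  let M := (IsUnit.submonoid E).comap (Subalgebra.inclusion h)
  have : IsLocalization M E := isLocalization_comap_isUnit h hfrac
  obtain ⟨s, hs⟩ := (IsLocalizedModule.eq_zero_iff M (H1Cotangent.map A A C E)).mp hm
  exact ⟨s, s.2, hs⟩

end Localization

section Adjunction

open MvPolynomial

variable {A Ω κ : Type*} [CommRing A] [CommRing Ω] [Algebra A Ω]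

/-- The subring `B[y]` of `Ω` generated by a family `y` over `B`, as an `A`-subalgebra. -/
def adjoinRange (B : Subalgebra A Ω) (y : κ → Ω) : Subalgebra A Ω :=
  (aeval y : MvPolynomial κ B →ₐ[B] Ω).range.restrictScalars A

variable {B C : Subalgebra A Ω} {y : κ → Ω}

theorem adjoinRange_le_iff : adjoinRange B y ≤ C ↔ B ≤ C ∧ ∀ k, y k ∈ C := by
  refine ⟨fun h => ⟨fun b hb => h ⟨.C ⟨b, hb⟩, aeval_C _ _⟩, fun k => h ⟨X k, aeval_X _ _⟩⟩, ?_⟩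
  rintro ⟨hB, hy⟩ _ ⟨p, rfl⟩
  induction p using MvPolynomial.induction_on with
  | C b => simpa using hB b.2
  | add p q hp hq => exact (map_add (aeval y) p q).symm ▸ C.add_mem hp hq
  | mul_X p k hp => simpa using C.mul_mem hp (hy k)

theorem exists_generators_adjoinRange [Algebra B (adjoinRange B y)]
    [IsScalarTower B (adjoinRange B y) Ω]
    (hy : (RingHom.ker (aeval y : MvPolynomial κ B →ₐ[B] Ω)).IsPrincipal) :
    ∃ Q : Generators B (adjoinRange B y) κ, Q.ker.IsPrincipal := by
  let y' (k : κ) : adjoinRange B y := ⟨y k, (adjoinRange_le_iff.mp le_rfl).2 k⟩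
  have hval (p : MvPolynomial κ B) : ((aeval y' p : adjoinRange B y) : Ω) = aeval y p :=
    (aeval_algebraMap_apply Ω y' p).symm
  have hsurj : Function.Surjective (aeval (R := B) y') := by
    rintro ⟨_, p, rfl⟩
    exact ⟨p, Subtype.ext (hval p)⟩
  refine ⟨Generators.ofSurjective y' hsurj, ?_⟩
  convert hy
  rw [Generators.ker_eq_ker_aeval_val]
  refine Ideal.ext fun p => ?_
  rw [RingHom.mem_ker, RingHom.mem_ker, ← hval]
  exact Subtype.ext_iff

theorem isTorsionFree_h1Cotangent_adjoinRange [IsDomain Ω] [IsBezout B]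
    (hy : (RingHom.ker (aeval y : MvPolynomial κ B →ₐ[B] Ω)).IsPrincipal)
    [Module.IsTorsionFree B (H1Cotangent A B)] :
    Module.IsTorsionFree (adjoinRange B y) (H1Cotangent A (adjoinRange B y)) := by
  let i := Subalgebra.inclusion (adjoinRange_le_iff.mp (le_refl (adjoinRange B y))).1
  let := i.toRingHom.toAlgebra
  have : IsScalarTower A B (adjoinRange B y) := .of_algebraMap_eq' i.comp_algebraMap.symm
  have : IsScalarTower B (adjoinRange B y) Ω := .of_algebraMap_eq' rfl
  obtain ⟨Q, _⟩ := exists_generators_adjoinRange hy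
  exact isTorsionFree_h1Cotangent_trans Q

end Adjunction

section AdmissibilityOfFractions

open MvPolynomial

variable {A Ω κ : Type*} [CommRing A] [Field Ω] [Algebra A Ω] {B E : Subalgebra A Ω}

theorem faithfullyFlat_of_inv_mem [ValuationRing B] [IsLocalRing E] (hBE : B ≤ E)
    (hinv : ∀ b ∈ B, b⁻¹ ∈ E → b⁻¹ ∈ B) :
    letI := (Subalgebra.inclusion hBE).toRingHom.toAlgebra
    Module.FaithfullyFlat B E := by
  let := (Subalgebra.inclusion hBE).toRingHom.toAlgebra
  have : FaithfulSMul B E :=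
    (faithfulSMul_iff_algebraMap_injective B E).mpr (Subalgebra.inclusion_injective hBE)
  have : Module.Flat B E := by
    rw [Module.Flat.flat_iff_torsion_eq_bot_of_isBezout,
      ← Submodule.isTorsionFree_iff_torsion_eq_bot]
    infer_instance
  have : IsLocalHom (algebraMap B E) := by
    refine ⟨fun b hb => ?_⟩
    obtain ⟨hb0, hbE⟩ := isUnit_iff_inv_mem.mp hb
    exact isUnit_iff_inv_mem.mpr ⟨hb0, hinv b b.2 hbE⟩
  exact Module.FaithfullyFlat.of_flat_of_isLocalHom

theorem eq_zero_of_smul_h1Inclusion_eq_zero {y : κ → Ω} [ValuationRing B] [IsLocalRing E]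
    (hy : (RingHom.ker (aeval y : MvPolynomial κ B →ₐ[B] Ω)).IsPrincipal)
    (hBD : B ≤ adjoinRange B y) (hDE : adjoinRange B y ≤ E)
    (hinv : ∀ b ∈ B, b⁻¹ ∈ E → b⁻¹ ∈ B) {s : adjoinRange B y}
    (hs : IsUnit (Subalgebra.inclusion hDE s)) {m : H1Cotangent A B}
    (hm : s • h1Inclusion hBD m = 0) : m = 0 := by
  let := (Subalgebra.inclusion hBD).toRingHom.toAlgebra
  have : IsScalarTower A B (adjoinRange B y) :=
    .of_algebraMap_eq' (Subalgebra.inclusion hBD).comp_algebraMap.symm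
  have : IsScalarTower B (adjoinRange B y) Ω := .of_algebraMap_eq' rfl
  let := (Subalgebra.inclusion hDE).toRingHom.toAlgebra
  let := (Subalgebra.inclusion (hBD.trans hDE)).toRingHom.toAlgebra
  have : IsScalarTower B (adjoinRange B y) E := .of_algebraMap_eq' rfl
  have : Module.FaithfullyFlat B E := faithfullyFlat_of_inv_mem (hBD.trans hDE) hinv
  obtain ⟨Q, _⟩ := exists_generators_adjoinRange hy
  exact eq_zero_of_smul_h1CotangentMap_eq_zero Q (V := E) hs hm

theorem IsAdmissible.of_fractions {ι : Type*} [Nonempty ι] {y : ι → κ → Ω} [ValuationRing B]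
    [IsLocalRing E] (hinv : ∀ b ∈ B, b⁻¹ ∈ E → b⁻¹ ∈ B)
    (hker : ∀ i, (RingHom.ker (aeval (y i) : MvPolynomial κ B →ₐ[B] Ω)).IsPrincipal)
    (hdir : Directed (· ≤ ·) fun i => adjoinRange B (y i)) (hle : ∀ i, adjoinRange B (y i) ≤ E)
    (hfrac : ∀ z ∈ E, ∃ s ∈ ⨆ i, adjoinRange B (y i),
      s ≠ 0 ∧ s⁻¹ ∈ E ∧ z * s ∈ ⨆ i, adjoinRange B (y i)) :
    IsAdmissible B E := by
  let D i := adjoinRange B (y i)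
  have hBD i : B ≤ D i := (adjoinRange_le_iff.mp le_rfl).1
  have hDC i : D i ≤ ⨆ i, D i := le_iSup D i
  have hCE : ⨆ i, D i ≤ E := iSup_le hle
  let i₀ := Classical.arbitrary ι
  refine ⟨(hBD i₀).trans (hle i₀), ?_, fun _ => ?_⟩
  · rw [injective_iff_map_eq_zero]
    intro m hm
    rw [h1Inclusion_trans ((hBD i₀).trans (hDC i₀)) hCE] at hm
    obtain ⟨⟨s, hsC⟩, hsE, hsm⟩ := exists_isUnit_smul_eq_zero hCE hfrac hm
    obtain ⟨i, hi⟩ := (mem_iSup_subalgebra_of_directed hdir).mp hsC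
    have hsm' : h1Inclusion (hDC i) ((⟨s, hi⟩ : D i) • h1Inclusion (hBD i) m) = 0 := by
      rw [map_smulₛₗ, ← h1Inclusion_trans]
      exact hsm
    obtain ⟨j, hij, hj⟩ := exists_h1Inclusion_eq_zero hdir hsm'
    rw [map_smulₛₗ, ← h1Inclusion_trans] at hj
    exact eq_zero_of_smul_h1Inclusion_eq_zero (hker j) (hBD j) (hle j) hinv hsE hj
  · have := isTorsionFree_h1Cotangent_iSup hdir fun i =>
      isTorsionFree_h1Cotangent_adjoinRange (hker i)
    exact isTorsionFree_h1Cotangent_of_fractions hCE hfrac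

end AdmissibilityOfFractions

section Integers

open MvPolynomial

theorem valuationRing_of_div_mem {A Ω : Type*} [CommRing A] [Field Ω] [Algebra A Ω]
    {C : Subalgebra A Ω} (h : ∀ a ∈ C, ∀ b ∈ C, a / b ∈ C ∨ b / a ∈ C) : ValuationRing C := by
  refine ValuationRing.iff_dvd_total.mpr ⟨fun a b => ?_⟩
  by_cases ha : (a : Ω) = 0
  · exact .inr ⟨0, Subtype.ext (by simpa using ha)⟩
  by_cases hb : (b : Ω) = 0
  · exact .inl ⟨0, Subtype.ext (by simpa using hb)⟩
  rcases h a a.2 b b.2 with h | h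
  · exact .inr ⟨⟨_, h⟩, Subtype.ext (mul_div_cancel₀ (a : Ω) hb).symm⟩
  · exact .inl ⟨⟨_, h⟩, Subtype.ext (mul_div_cancel₀ (b : Ω) ha).symm⟩

variable {A K Ω Γ : Type*} [CommRing A] [Field K] [Field Ω] [Algebra K Ω] [Algebra A K]
  [Algebra A Ω] [IsScalarTower A K Ω] [LinearOrderedCommGroupWithZero Γ] {v : Valuation Ω Γ}

/-- The valuation ring of the restriction of `v` to a subfield `F` of `Ω`, as a subalgebra over a
ring `A` of `v`-integers. -/
def integers (hA : ∀ a : A, v (algebraMap A Ω a) ≤ 1) (F : IntermediateField K Ω) :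
    Subalgebra A Ω where
  carrier := {x | x ∈ F ∧ v x ≤ 1}
  mul_mem' hx hy := ⟨F.mul_mem hx.1 hy.1, by simpa using mul_le_one' hx.2 hy.2⟩
  add_mem' hx hy := ⟨F.add_mem hx.1 hy.1, v.map_add_le hx.2 hy.2⟩
  algebraMap_mem' a := ⟨IsScalarTower.algebraMap_apply A K Ω a ▸ F.algebraMap_mem _, hA a⟩

variable {hA : ∀ a : A, v (algebraMap A Ω a) ≤ 1} {F F' : IntermediateField K Ω}

theorem integers_mono (h : F ≤ F') : integers hA F ≤ integers hA F' := fun _ hx => ⟨h hx.1, hx.2⟩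

theorem div_mem_integers {a b : Ω} (ha : a ∈ F) (hb : b ∈ F) (h : v a ≤ v b) :
    a / b ∈ integers hA F :=
  ⟨F.div_mem ha hb, map_div₀ v a b ▸ div_le_one_of_le₀ h zero_le⟩

instance valuationRing_integers : ValuationRing (integers hA F) :=
  valuationRing_of_div_mem fun a ha b hb => (le_total (v a) (v b)).imp
    (div_mem_integers ha.1 hb.1) (div_mem_integers hb.1 ha.1)

theorem mul_mem_of_valuation_le {C : Subalgebra A Ω} (hC : integers hA F ≤ C) {b c y : Ω}
    (hb : b ∈ F) (hc : c ∈ F) (hbc : v b ≤ v c) (hy : c * y ∈ C) : b * y ∈ C := by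
  by_cases hc0 : c = 0
  · have hb0 : b = 0 := v.zero_iff.mp (le_zero_iff.mp (by simpa [hc0] using hbc))
    simp [hb0]
  · rw [← div_mul_cancel₀ b hc0, mul_assoc]
    exact C.mul_mem (hC (div_mem_integers hb hc hbc)) hy

theorem transcendental_integers {x : Ω} (hx : Transcendental F x) :
    Transcendental (integers hA F) x := by
  let i : integers hA F →+* F :=
    (Subalgebra.inclusion (S := integers hA F) (T := F.toSubalgebra.restrictScalars A)
      fun _ h => h.1).toRingHom
  exact Transcendental.of_ringHom_of_comp_eq i (RingHom.id Ω) hx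
    (Subalgebra.inclusion_injective _) rfl

variable (v) in
/-- The element `z` is a fraction of elements of `C` whose denominator has valuation `1`. -/
def IsUnitFraction (C : Subalgebra A Ω) (z : Ω) : Prop := ∃ s ∈ C, v s = 1 ∧ z * s ∈ C

theorem isUnitFraction_of_mem {C : Subalgebra A Ω} {z : Ω} (hz : z ∈ C) : IsUnitFraction v C z :=
  ⟨1, C.one_mem, map_one v, by simpa using hz⟩

theorem isUnitFraction_div {C : Subalgebra A Ω} {m m' u u' : Ω} (hu : u ∈ C) (hvu : v u = 1)
    (hu' : u' ∈ C) (hvu' : v u' = 1) (hm : v (m / m') ≤ 1 → m / m' ∈ C)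
    (hz : v (m * u / (m' * u')) ≤ 1) : IsUnitFraction v C (m * u / (m' * u')) := by
  have hu0 : u' ≠ 0 := v.ne_zero_iff.mp (hvu' ▸ one_ne_zero)
  refine ⟨u', hu', hvu', ?_⟩
  rw [mul_div_mul_comm, mul_assoc, div_mul_cancel₀ u hu0]
  refine C.mul_mem (hm ?_) hu
  simpa [mul_div_mul_comm, hvu, hvu'] using hz

theorem isAdmissible_integers {κ ι : Type*} [Nonempty ι] {y : ι → κ → Ω}
    (hker : ∀ i, (RingHom.ker
      (aeval (y i) : MvPolynomial κ (integers hA F) →ₐ[integers hA F] Ω)).IsPrincipal)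
    (hdir : Directed (· ≤ ·) fun i => adjoinRange (integers hA F) (y i)) (hF : F ≤ F')
    (hy : ∀ i k, y i k ∈ integers hA F')
    (hfrac : ∀ C : Subalgebra A Ω, integers hA F ≤ C → (∀ i k, y i k ∈ C) →
      ∀ z ∈ integers hA F', IsUnitFraction v C z) :
    IsAdmissible (integers hA F) (integers hA F') := by
  let D i := adjoinRange (integers hA F) (y i)
  have hD i : integers hA F ≤ D i ∧ ∀ k, y i k ∈ D i := adjoinRange_le_iff.mp le_rfl
  have hle i : D i ≤ integers hA F' := adjoinRange_le_iff.mpr ⟨integers_mono hF, hy i⟩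
  refine .of_fractions (fun b hb hb' => ⟨F.inv_mem hb.1, hb'.2⟩) hker hdir hle fun z hz => ?_
  obtain ⟨s, hs, hvs, hzs⟩ := hfrac (⨆ i, D i)
    ((hD (Classical.arbitrary ι)).1.trans (le_iSup D _)) (fun i k => le_iSup D i ((hD i).2 k)) z hz
  refine ⟨s, hs, v.ne_zero_iff.mp (hvs ▸ one_ne_zero), ?_, hzs⟩
  exact ⟨F'.inv_mem (iSup_le hle hs).1, by rw [map_inv₀, hvs, inv_one]⟩

theorem isAdmissible_integers_of_scalings {κ : Type*} {x : κ → Ω} {N : κ → Set Ω}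
    (hF : F ≤ F') (hx : ∀ k, x k ∈ F') (hN : ∀ k, (N k).Nonempty)
    (hNF : ∀ k, ∀ b ∈ N k, b ∈ F ∧ v (b * x k) ≤ 1)
    (hker : ∀ b : κ → Ω, (∀ k, b k ∈ N k) → (RingHom.ker (aeval (fun k => b k * x k) :
      MvPolynomial κ (integers hA F) →ₐ[integers hA F] Ω)).IsPrincipal)
    (hfrac : ∀ C : Subalgebra A Ω, integers hA F ≤ C → (∀ k, ∀ b ∈ N k, b * x k ∈ C) →
      ∀ z ∈ integers hA F', IsUnitFraction v C z) :
    IsAdmissible (integers hA F) (integers hA F') := by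
  classical
  let y (b : ∀ k, N k) (k : κ) : Ω := b k * x k
  have hmono : ∀ b c : ∀ k, N k, (∀ k, v (b k) ≤ v (c k)) →
      adjoinRange (integers hA F) (y b) ≤ adjoinRange (integers hA F) (y c) := fun b c hbc =>
    have ⟨hle, hyc⟩ := adjoinRange_le_iff.mp (le_refl (adjoinRange (integers hA F) (y c)))
    adjoinRange_le_iff.mpr ⟨hle, fun k => mul_mem_of_valuation_le hle
      (hNF k _ (b k).2).1 (hNF k _ (c k).2).1 (hbc k) (hyc k)⟩
  have (k : κ) : Nonempty (N k) := (hN k).to_subtype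
  refine isAdmissible_integers (y := y) (fun b => hker _ fun k => (b k).2) (fun b c => ?_) hF
    (fun b k => ⟨F'.mul_mem (hF (hNF k _ (b k).2).1) (hx k), (hNF k _ (b k).2).2⟩) ?_
  · have hmax k : ∃ d : N k, v (b k) ≤ v d ∧ v (c k) ≤ v d :=
      (le_total (v (b k)) (v (c k))).elim (fun h => ⟨c k, h, le_rfl⟩) fun h => ⟨b k, le_rfl, h⟩
    choose d hbd hcd using hmax
    exact ⟨d, hmono b d hbd, hmono c d hcd⟩
  · refine fun C hC hyC => hfrac C hC fun k b hb => ?_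
    simpa [y] using hyC (Function.update (fun k => Classical.arbitrary (N k)) k ⟨b, hb⟩) k

end Integers

section PolynomialValues

open Polynomial

variable {A K Ω Γ : Type*} [CommRing A] [Field K] [Field Ω] [Algebra K Ω] [Algebra A Ω]
  [LinearOrderedCommGroupWithZero Γ] {v : Valuation Ω Γ} {F : IntermediateField K Ω}
  {C : Subalgebra A Ω}

/-- The subfield `F` contains every element of `Ω` of degree at most `d` over `F`. -/
def ContainsRoots (F : IntermediateField K Ω) (d : ℕ) : Prop :=
  ∀ g : F[X], g ≠ 0 → g.natDegree ≤ d → ∀ a : Ω, aeval a g = 0 → a ∈ F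

theorem ContainsRoots.mono {d e : ℕ} (h : ContainsRoots F d) (hed : e ≤ d) : ContainsRoots F e :=
  fun g hg hge => h g hg (hge.trans hed)

theorem containsRoots_of_forall_transcendental (h : ∀ a ∉ F, Transcendental F a) (d : ℕ) :
    ContainsRoots F d :=
  fun g hg _ a ha => by_contra fun haF => h a haF ⟨g, hg, ha⟩

theorem aeval_eq_sum_coe_mul_pow (x : Ω) (g : F[X]) :
    aeval x g = ∑ i ∈ g.support, (g.coeff i : Ω) * x ^ i := by
  rw [aeval_def, eval₂_eq_sum]
  rfl

variable [IsAlgClosed Ω]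

theorem ContainsRoots.exists_pow_eq {m : ℕ} (h : ContainsRoots F m) (hm : m ≠ 0) {c : Ω}
    (hc : c ∈ F) : ∃ b ∈ F, b ^ m = c := by
  obtain ⟨b, hb⟩ := IsAlgClosed.exists_pow_nat_eq c (Nat.pos_of_ne_zero hm)
  refine ⟨b, h (X ^ m - Polynomial.C ⟨c, hc⟩) (X_pow_sub_C_ne_zero (Nat.pos_of_ne_zero hm) _)
    natDegree_X_pow_sub_C.le b ?_, hb⟩
  simp [hb]

theorem ContainsRoots.splits {g : F[X]} (h : ContainsRoots F g.natDegree) : g.Splits := by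
  refine .of_splits_map (algebraMap F Ω) (IsAlgClosed.splits _) fun a ha => ?_
  have hg : g ≠ 0 := by rintro rfl; simp at ha
  refine ⟨⟨a, h g hg le_rfl a ?_⟩, rfl⟩
  rw [mem_roots', IsRoot, eval_map_algebraMap] at ha
  exact ha.2

theorem exists_aeval_eq_mul_of_forall_sub {x : Ω} (hx : x ∉ F)
    (hC : ∀ a ∈ F, ∃ b ∈ F, v b = v (x - a) ∧ (x - a) / b ∈ C) {g : F[X]}
    (hg : ContainsRoots F g.natDegree) :
    ∃ c ∈ F, ∃ u ∈ C, v u = 1 ∧ aeval x g = c * u := by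
  have hlin (a : F) : ∃ c ∈ F, ∃ u ∈ C, v u = 1 ∧ x - a = c * u := by
    have hxa : x - a ≠ 0 := fun h => hx (sub_eq_zero.mp h ▸ a.2)
    obtain ⟨b, hb, hvb, hbC⟩ := hC a a.2
    have hb0 : b ≠ 0 := v.ne_zero_iff.mp (hvb ▸ v.ne_zero_iff.mpr hxa)
    refine ⟨b, hb, _, hbC, ?_, (mul_div_cancel₀ _ hb0).symm⟩
    rw [map_div₀, hvb, div_self (v.ne_zero_iff.mpr hxa)]
  have hsplits := hg.splits
  clear hg
  induction hsplits using Submonoid.closure_induction with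
  | mem f hf =>
    rcases hf with ⟨a, rfl⟩ | ⟨a, rfl⟩
    · exact ⟨a, a.2, 1, C.one_mem, map_one v, by simp⟩
    · simpa using hlin (-a)
  | one => exact ⟨1, F.one_mem, 1, C.one_mem, map_one v, by simp⟩
  | mul f g _ _ hf hg =>
    obtain ⟨c, hc, u, hu, hvu, hcu⟩ := hf
    obtain ⟨d, hd, w, hw, hvw, hdw⟩ := hg
    refine ⟨c * d, F.mul_mem hc hd, u * w, C.mul_mem hu hw, by simp [hvu, hvw], ?_⟩
    rw [map_mul, hcu, hdw, mul_mul_mul_comm]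

theorem valuation_mul_pow_ne {x : Ω} (hx : ∀ b ∈ F, v x ≠ v b) {a b : Ω} (ha : a ∈ F) (hb : b ∈ F)
    (hb0 : b ≠ 0) {i j : ℕ} (hij : i < j) (hF : ContainsRoots F (j - i)) :
    v (a * x ^ i) ≠ v (b * x ^ j) := by
  have hx0 : v x ≠ 0 := v.map_zero ▸ hx 0 F.zero_mem
  obtain ⟨c, hc, hcab⟩ := hF.exists_pow_eq (Nat.sub_ne_zero_of_lt hij) (F.div_mem ha hb)
  intro h
  refine hx c hc ((pow_left_inj₀ zero_le zero_le (Nat.sub_ne_zero_of_lt hij)).mp ?_)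
  rw [← map_pow v c, hcab, map_div₀, eq_div_iff (v.ne_zero_iff.mpr hb0)]
  refine mul_right_cancel₀ (pow_ne_zero i hx0) ?_
  calc v x ^ (j - i) * v b * v x ^ i = v (b * x ^ j) := by
        rw [map_mul, map_pow, mul_right_comm, ← pow_add, Nat.sub_add_cancel hij.le, mul_comm]
    _ = v a * v x ^ i := by rw [← h, map_mul, map_pow]

theorem exists_dominant_monomial {x : Ω} (hx : ∀ b ∈ F, v x ≠ v b) {g : F[X]}
    (hg : ContainsRoots F g.natDegree) :
    ∃ k, v (aeval x g) = v (g.coeff k * x ^ k) ∧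
      ∀ i, v (g.coeff i * x ^ i) ≤ v (g.coeff k * x ^ k) := by
  by_cases hg0 : g = 0
  · exact ⟨0, by simp [hg0], by simp [hg0]⟩
  obtain ⟨k, hk, hmax⟩ := g.support.exists_max_image
    (fun i => v ((g.coeff i : Ω) * x ^ i)) (support_nonempty.mpr hg0)
  have hne : ∀ i, ∀ j ∈ g.support, i < j →
      v ((g.coeff i : Ω) * x ^ i) ≠ v ((g.coeff j : Ω) * x ^ j) := fun i j hj hij =>
    valuation_mul_pow_ne hx (g.coeff i).2 (g.coeff j).2 (by simpa using hj) hij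
      (hg.mono ((Nat.sub_le j i).trans (le_natDegree_of_mem_supp j hj)))
  refine ⟨k, ?_, fun i => ?_⟩
  · rw [aeval_eq_sum_coe_mul_pow]
    refine Valuation.map_sum_eq_of_lt _ hk fun i hi => ?_
    obtain ⟨hi, hik⟩ := Finset.mem_sdiff.mp hi
    refine (hmax i hi).lt_of_ne ?_
    rcases lt_or_gt_of_ne (Finset.notMem_singleton.mp hik) with h | h
    · exact hne i k hk h
    · exact (hne k i hi h).symm
  · by_cases hi : i ∈ g.support
    · exact hmax i hi
    · simp [notMem_support_iff.mp hi]

variable [Algebra A K] [IsScalarTower A K Ω] {hA : ∀ a : A, v (algebraMap A Ω a) ≤ 1}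

theorem mul_pow_mem {x : Ω} (hC : integers hA F ≤ C)
    (hxC : ∀ b ∈ F, v (b * x) ≤ 1 → b * x ∈ C) {m : ℕ} (hF : ContainsRoots F m) {c : Ω}
    (hc : c ∈ F) (h : v (c * x ^ m) ≤ 1) : c * x ^ m ∈ C := by
  by_cases hm : m = 0
  · subst hm
    rw [pow_zero, mul_one] at h ⊢
    exact hC ⟨hc, h⟩
  · obtain ⟨b, hb, rfl⟩ := hF.exists_pow_eq hm hc
    rw [← mul_pow] at h ⊢
    exact C.pow_mem (hxC b hb ((pow_le_one_iff hm).mp (map_pow v _ _ ▸ h))) m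

theorem mul_zpow_mem {x : Ω} (hC : integers hA F ≤ C)
    (hxC : ∀ b ∈ F, v (b * x) ≤ 1 → b * x ∈ C) (hxC' : ∀ b ∈ F, v (b * x⁻¹) ≤ 1 → b * x⁻¹ ∈ C)
    {j : ℤ} (hF : ContainsRoots F j.natAbs) {c : Ω} (hc : c ∈ F) (h : v (c * x ^ j) ≤ 1) :
    c * x ^ j ∈ C := by
  obtain ⟨m, rfl | rfl⟩ := j.eq_nat_or_neg
  · rw [zpow_natCast] at h ⊢
    exact mul_pow_mem hC hxC hF hc h
  · rw [zpow_neg, zpow_natCast, ← inv_pow] at h ⊢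
    rw [Int.natAbs_neg] at hF
    exact mul_pow_mem hC hxC' hF hc h

theorem exists_aeval_eq_monomial_mul {x : Ω} (hC : integers hA F ≤ C)
    (hxC : ∀ b ∈ F, v (b * x) ≤ 1 → b * x ∈ C) (hxC' : ∀ b ∈ F, v (b * x⁻¹) ≤ 1 → b * x⁻¹ ∈ C)
    (hF : ∀ d, ContainsRoots F d) (hx : ∀ b ∈ F, v x ≠ v b) (g : F[X]) :
    ∃ c ∈ F, ∃ k : ℕ, ∃ u ∈ C, v u = 1 ∧ aeval x g = c * x ^ k * u := by
  obtain ⟨k, hk, hmax⟩ := exists_dominant_monomial hx (hF g.natDegree)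
  by_cases hm : (g.coeff k : Ω) * x ^ k = 0
  · rw [hm, map_zero, v.zero_iff] at hk
    exact ⟨0, F.zero_mem, 0, 1, C.one_mem, map_one v, by simp [hk]⟩
  have hx0 : x ≠ 0 := fun h => hx 0 F.zero_mem (by rw [h])
  have hterm (i : ℕ) : (g.coeff i : Ω) * x ^ i / (g.coeff k * x ^ k) =
      g.coeff i / g.coeff k * x ^ ((i : ℤ) - k) := by
    rw [zpow_sub₀ hx0, zpow_natCast, zpow_natCast, mul_div_mul_comm]
  refine ⟨g.coeff k, (g.coeff k).2, k, aeval x g / (g.coeff k * x ^ k), ?_, ?_, ?_⟩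
  · rw [aeval_eq_sum_coe_mul_pow, Finset.sum_div]
    refine C.sum_mem fun i _ => ?_
    rw [hterm]
    refine mul_zpow_mem hC hxC hxC' (hF _) (F.div_mem (g.coeff i).2 (g.coeff k).2) ?_
    rw [← hterm, map_div₀]
    exact div_le_one_of_le₀ (hmax i) zero_le
  · rw [map_div₀, hk, div_self (v.ne_zero_iff.mpr hm)]
  · exact (mul_div_cancel₀ _ hm).symm

end PolynomialValues

section SimpleExtensions

open Polynomial IntermediateField

variable {A K Ω Γ : Type*} [CommRing A] [Field K] [Field Ω] [Algebra K Ω] [Algebra A K]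
  [Algebra A Ω] [IsScalarTower A K Ω] [LinearOrderedCommGroupWithZero Γ]
  {v : Valuation Ω Γ} {hA : ∀ a : A, v (algebraMap A Ω a) ≤ 1} {F F' : IntermediateField K Ω}
  {x : Ω}

theorem isPrincipal_ker_aeval_scaled_pair (hx : Transcendental F x) {b c : Ω} (hb : b ∈ F)
    (hb0 : b ≠ 0) (hbx : v (b * x) ≤ 1) (hc : c ∈ F) (hc0 : c ≠ 0) (hcx : v (c * x⁻¹) ≤ 1) :
    (RingHom.ker (MvPolynomial.aeval ![b * x, c * x⁻¹] :
      MvPolynomial (Fin 2) (integers hA F) →ₐ[integers hA F] Ω)).IsPrincipal := by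
  have hx0 : x ≠ 0 := fun h => hx (h ▸ isAlgebraic_zero)
  have hbc : b * x * (c * x⁻¹) = b * c := by field_simp
  have hd : b * c ∈ integers hA F :=
    ⟨F.mul_mem hb hc, by rw [← hbc, map_mul]; exact mul_le_one' hbx hcx⟩
  refine isPrincipal_ker_aeval_pair (d := ⟨b * c, hd⟩)
    (fun h => mul_ne_zero hb0 hc0 (congrArg Subtype.val h)) hbc (transcendental_integers ?_)
  intro hbx
  have hbinv : IsAlgebraic F b⁻¹ := isAlgebraic_algebraMap (⟨b⁻¹, F.inv_mem hb⟩ : F)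
  exact hx (inv_mul_cancel_left₀ hb0 x ▸ hbinv.mul hbx)

theorem adjoinRange_sub_div_le {a b c d : Ω} (ha : a ∈ F) (hb : b ∈ F) (hb0 : b ≠ 0)
    (hc : c ∈ F) (hd : d ∈ F) (hd0 : d ≠ 0) (hab : v (x - a) ≤ v b) (hcd : v (x - c) ≤ v d)
    (hdb : v d ≤ v b) :
    adjoinRange (integers hA F) (fun _ : Unit => (x - a) / b) ≤
      adjoinRange (integers hA F) (fun _ : Unit => (x - c) / d) := by
  obtain ⟨hle, hy⟩ := adjoinRange_le_iff.mp
    (le_refl (adjoinRange (integers hA F) fun _ : Unit => (x - c) / d))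
  have hca : v (c - a) ≤ v b := by
    rw [← sub_sub_sub_cancel_left a c x]
    exact v.map_sub_le hab (hcd.trans hdb)
  have hsplit : (x - a) / b = d / b * ((x - c) / d) + (c - a) / b := by
    field_simp
    ring
  refine adjoinRange_le_iff.mpr ⟨hle, fun _ => hsplit ▸ add_mem (mul_mem ?_ (hy ())) ?_⟩
  · exact hle (div_mem_integers hd hb hdb)
  · exact hle (div_mem_integers (F.sub_mem hc ha) hb hca)

theorem isAdmissible_integers_of_multiples (hF : F ≤ F') (hx : x ∈ F')
    (hfrac : ∀ C : Subalgebra A Ω, integers hA F ≤ C → (∀ b ∈ F, v (b * x) ≤ 1 → b * x ∈ C) →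
      ∀ z ∈ integers hA F', IsUnitFraction v C z) :
    IsAdmissible (integers hA F) (integers hA F') :=
  isAdmissible_integers_of_scalings (κ := Unit) (x := fun _ => x)
    (N := fun _ => {b | b ∈ F ∧ v (b * x) ≤ 1}) hF (fun _ => hx)
    (fun _ => ⟨0, F.zero_mem, by simp⟩) (fun _ _ hb => hb)
    (fun _ _ => isPrincipal_ker_aeval_of_unique _)
    fun C hC hxC => hfrac C hC fun b hb hbx => hxC () b ⟨hb, hbx⟩

variable [IsAlgClosed Ω]

theorem isAdmissible_integers_of_immediate (hF : F ≤ F') (hxF : x ∉ F) (hxF' : x ∈ F')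
    (hz : ∀ z ∈ F', ∃ g h : F[X], ContainsRoots F g.natDegree ∧ ContainsRoots F h.natDegree ∧
      z = aeval x g / aeval x h)
    (hval : ∀ a ∈ F, ∃ b ∈ F, v b = v (x - a)) :
    IsAdmissible (integers hA F) (integers hA F') := by
  choose! b hb hvb using hval
  let y (a : F) (_ : Unit) : Ω := (x - a) / b a
  have hvy (a : F) : v (x - a) / v (b a) = 1 := by
    rw [hvb a a.2, div_self (v.ne_zero_iff.mpr fun h => hxF (by rw [sub_eq_zero.mp h]; exact a.2))]
  have hb0 (a : F) : b a ≠ 0 := fun h => by simpa [h] using hvy a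
  have hmono (a c : F) (hca : v (b c) ≤ v (b a)) :
      adjoinRange (integers hA F) (y a) ≤ adjoinRange (integers hA F) (y c) :=
    adjoinRange_sub_div_le a.2 (hb a a.2) (hb0 a) c.2 (hb c c.2) (hb0 c) (hvb a a.2).ge
      (hvb c c.2).ge hca
  have hyF (a : F) (k : Unit) : y a k ∈ integers hA F' :=
    ⟨F'.div_mem (F'.sub_mem hxF' (hF a.2)) (hF (hb a a.2)), (map_div₀ v _ _).trans_le (hvy a).le⟩
  refine isAdmissible_integers (fun a => isPrincipal_ker_aeval_of_unique (y a)) (fun a c => ?_) hF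
    hyF fun C hC hyC z hz' => ?_
  · rcases le_total (v (b a)) (v (b c)) with h | h
    · exact ⟨a, le_rfl, hmono c a h⟩
    · exact ⟨c, hmono a c h, le_rfl⟩
  · have hC' : ∀ a ∈ F, ∃ b ∈ F, v b = v (x - a) ∧ (x - a) / b ∈ C := fun a ha =>
      ⟨b a, hb a ha, hvb a ha, hyC ⟨a, ha⟩ ()⟩
    obtain ⟨g, h, hg, hh, rfl⟩ := hz z hz'.1
    obtain ⟨c, hc, u, hu, hvu, hgu⟩ := exists_aeval_eq_mul_of_forall_sub hxF hC' hg
    obtain ⟨d, hd, w, hw, hvw, hhw⟩ := exists_aeval_eq_mul_of_forall_sub hxF hC' hh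
    rw [hgu, hhw] at hz' ⊢
    exact isUnitFraction_div hu hvu hw hvw (fun hcd => hC ⟨F.div_mem hc hd, hcd⟩) hz'.2

theorem isAdmissible_integers_of_polynomial (hF : F ≤ F') (hxF' : x ∈ F')
    (hz : ∀ z ∈ F', ∃ g : F[X], ContainsRoots F g.natDegree ∧ z = aeval x g)
    (hx : ∀ b ∈ F, v x ≠ v b) : IsAdmissible (integers hA F) (integers hA F') := by
  refine isAdmissible_integers_of_multiples hF hxF' fun C hC hxC z hz' => isUnitFraction_of_mem ?_
  obtain ⟨g, hg, rfl⟩ := hz z hz'.1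
  obtain ⟨k, hk, hmax⟩ := exists_dominant_monomial hx hg
  rw [aeval_eq_sum_coe_mul_pow]
  exact C.sum_mem fun i hi => mul_pow_mem hC hxC
    (hg.mono (le_natDegree_of_mem_supp i hi)) (g.coeff i).2 ((hmax i).trans (hk ▸ hz'.2))

theorem isUnitFraction_of_rational {C : Subalgebra A Ω} (hC : integers hA F ≤ C)
    (hxC : ∀ b ∈ F, b ≠ 0 → v (b * x) ≤ 1 → b * x ∈ C)
    (hxC' : ∀ b ∈ F, b ≠ 0 → v (b * x⁻¹) ≤ 1 → b * x⁻¹ ∈ C)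
    (hroots : ∀ d, ContainsRoots F d) (hx : ∀ b ∈ F, v x ≠ v b) (g h : F[X])
    (hgh : v (aeval x g / aeval x h) ≤ 1) : IsUnitFraction v C (aeval x g / aeval x h) := by
  have hmem {y : Ω} (hy : ∀ b ∈ F, b ≠ 0 → v (b * y) ≤ 1 → b * y ∈ C) (b : Ω) (hb : b ∈ F)
      (hby : v (b * y) ≤ 1) : b * y ∈ C := by
    rcases eq_or_ne b 0 with rfl | hb0
    exacts [by simp, hy b hb hb0 hby]
  have hx0 : x ≠ 0 := fun h => hx 0 F.zero_mem (by rw [h])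
  obtain ⟨c, hc, k, u, hu, hvu, hgu⟩ :=
    exists_aeval_eq_monomial_mul hC (hmem hxC) (hmem hxC') hroots hx g
  obtain ⟨d, hd, l, w, hw, hvw, hhw⟩ :=
    exists_aeval_eq_monomial_mul hC (hmem hxC) (hmem hxC') hroots hx h
  rw [hgu, hhw] at hgh ⊢
  refine isUnitFraction_div hu hvu hw hvw (fun hm => ?_) hgh
  rw [mul_div_mul_comm, ← zpow_natCast x k, ← zpow_natCast x l, ← zpow_sub₀ hx0] at hm ⊢
  exact mul_zpow_mem hC (hmem hxC) (hmem hxC') (hroots _) (F.div_mem hc hd) hm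

theorem isAdmissible_integers_of_rational (hF : F ≤ F') (hxF' : x ∈ F')
    (hz : ∀ z ∈ F', ∃ g h : F[X], z = aeval x g / aeval x h) (hxt : Transcendental F x)
    (hroots : ∀ d, ContainsRoots F d) (hx : ∀ b ∈ F, v x ≠ v b) :
    IsAdmissible (integers hA F) (integers hA F') := by
  have hfrac {C : Subalgebra A Ω} (hC : integers hA F ≤ C)
      (hxC : ∀ b ∈ F, b ≠ 0 → v (b * x) ≤ 1 → b * x ∈ C)
      (hxC' : ∀ b ∈ F, b ≠ 0 → v (b * x⁻¹) ≤ 1 → b * x⁻¹ ∈ C) (z : Ω)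
      (hzF : z ∈ integers hA F') : IsUnitFraction v C z := by
    obtain ⟨g, h, rfl⟩ := hz z hzF.1
    exact isUnitFraction_of_rational hC hxC hxC' hroots hx g h hzF.2
  let N (y : Ω) : Set Ω := {b | b ∈ F ∧ b ≠ 0 ∧ v (b * y) ≤ 1}
  rcases (N x).eq_empty_or_nonempty with hNx | hNx
  · exact isAdmissible_integers_of_multiples hF (F'.inv_mem hxF') fun C hC hxC =>
      hfrac hC (fun b hb hb0 hbx => (hNx.le ⟨hb, hb0, hbx⟩).elim) fun b hb _ => hxC b hb
  rcases (N x⁻¹).eq_empty_or_nonempty with hNx' | hNx'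
  · exact isAdmissible_integers_of_multiples hF hxF' fun C hC hxC =>
      hfrac hC (fun b hb _ => hxC b hb) fun b hb hb0 hbx => (hNx'.le ⟨hb, hb0, hbx⟩).elim
  refine isAdmissible_integers_of_scalings (x := ![x, x⁻¹]) (N := ![N x, N x⁻¹]) hF
    (Fin.forall_fin_two.mpr ⟨hxF', F'.inv_mem hxF'⟩) (Fin.forall_fin_two.mpr ⟨hNx, hNx'⟩)
    (Fin.forall_fin_two.mpr ⟨fun _ hb => ⟨hb.1, hb.2.2⟩, fun _ hb => ⟨hb.1, hb.2.2⟩⟩)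
    (fun b hb => ?_) fun C hC hxC => ?_
  · obtain ⟨⟨hb, hb0, hbx⟩, hc, hc0, hcx⟩ := Fin.forall_fin_two.mp hb
    have hpair : (fun k => b k * ![x, x⁻¹] k) = ![b 0 * x, b 1 * x⁻¹] :=
      funext (Fin.forall_fin_two.mpr ⟨rfl, rfl⟩)
    exact hpair ▸ isPrincipal_ker_aeval_scaled_pair hxt hb hb0 hbx hc hc0 hcx
  · exact hfrac hC (fun b hb hb0 hbx => hxC 0 b ⟨hb, hb0, hbx⟩)
      fun b hb hb0 hbx => hxC 1 b ⟨hb, hb0, hbx⟩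

end SimpleExtensions

section Exhaustion

open Polynomial IntermediateField

variable {A K Ω Γ : Type*} [CommRing A] [Field K] [Field Ω] [Algebra K Ω] [Algebra A K]
  [Algebra A Ω] [IsScalarTower A K Ω] [LinearOrderedCommGroupWithZero Γ]
  {v : Valuation Ω Γ} {hA : ∀ a : A, v (algebraMap A Ω a) ≤ 1} {F F' : IntermediateField K Ω}
  {x : Ω}

theorem exists_isAlgebraic_containsRoots (h : ∃ x ∉ F, IsAlgebraic F x) :
    ∃ x ∉ F, IsAlgebraic F x ∧ ∀ d < (minpoly F x).natDegree, ContainsRoots F d := by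
  obtain ⟨x, ⟨hxF, hx⟩, hmin⟩ := exists_minimalFor_of_wellFoundedLT
    (fun x => x ∉ F ∧ IsAlgebraic F x) (fun x => (minpoly F x).natDegree) h
  refine ⟨x, hxF, hx, fun d hd g hg hgd a ha => by_contra fun haF => ?_⟩
  have hga : (minpoly F a).natDegree ≤ g.natDegree := natDegree_le_of_dvd (minpoly.dvd F a ha) hg
  have hlt := (hga.trans hgd).trans_lt hd
  exact hlt.not_ge (hmin ⟨haF, g, hg, ha⟩ hlt.le)

theorem lt_restrictScalars_adjoin_simple (hx : x ∉ F) : F < F⟮x⟯.restrictScalars K :=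
  SetLike.lt_iff_le_and_exists.mpr ⟨fun a ha => F⟮x⟯.algebraMap_mem ⟨a, ha⟩,
    x, mem_adjoin_simple_self F x, hx⟩

theorem exists_aeval_eq_of_mem_adjoin_simple (hx : IsAlgebraic F x) {z : Ω} (hz : z ∈ F⟮x⟯) :
    ∃ g : F[X], g.natDegree < (minpoly F x).natDegree ∧ z = aeval x g := by
  rw [← mem_toSubalgebra, adjoin_simple_toSubalgebra_of_isAlgebraic hx,
    Algebra.adjoin_singleton_eq_range_aeval] at hz
  obtain ⟨p, rfl⟩ := hz
  exact ⟨p %ₘ minpoly F x, natDegree_modByMonic_lt p (minpoly.monic hx.isIntegral)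
    (minpoly.ne_one F x), (minpoly.aeval_modByMonic_minpoly p x).symm⟩

theorem iSup_integers_of_directed {ι : Type*} [Nonempty ι] {F : ι → IntermediateField K Ω}
    (hF : Directed (· ≤ ·) F) : ⨆ i, integers hA (F i) = integers hA (⨆ i, F i) := by
  refine le_antisymm (iSup_le fun i => integers_mono (le_iSup F i)) fun x hx => ?_
  obtain ⟨i, hi⟩ := Set.mem_iUnion.mp (coe_iSup_of_directed hF ▸ hx.1 : x ∈ ⋃ i, (F i : Set Ω))
  exact le_iSup (fun i => integers hA (F i)) i ⟨hi, hx.2⟩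

variable [IsAlgClosed Ω]

theorem exists_lt_isAdmissible_of_isAlgebraic (h : ∃ x ∉ F, IsAlgebraic F x) :
    ∃ F' > F, IsAdmissible (integers hA F) (integers hA F') := by
  obtain ⟨x, hxF, hx, hroots⟩ := exists_isAlgebraic_containsRoots h
  by_cases himm : ∀ a ∈ F, ∃ b ∈ F, v b = v (x - a)
  · have hlt := lt_restrictScalars_adjoin_simple hxF
    refine ⟨_, hlt, isAdmissible_integers_of_immediate hlt.le hxF (mem_adjoin_simple_self F x)
      (fun z hz => ?_) himm⟩
    obtain ⟨g, hg, hzg⟩ := exists_aeval_eq_of_mem_adjoin_simple hx hz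
    exact ⟨g, 1, hroots _ hg, hroots _ (natDegree_one.trans_lt (pos_of_gt hg)), by simpa using hzg⟩
  · push Not at himm
    obtain ⟨a, ha, hxa⟩ := himm
    have hdeg : (minpoly F (x - a)).natDegree = (minpoly F x).natDegree := by
      rw [show x - a = x - algebraMap F Ω ⟨a, ha⟩ from rfl, minpoly.sub_algebraMap, natDegree_comp,
        natDegree_X_add_C, mul_one]
    have hlt := lt_restrictScalars_adjoin_simple (F := F) (x := x - a)
      fun h => hxF (sub_add_cancel x a ▸ F.add_mem h ha)
    refine ⟨_, hlt, isAdmissible_integers_of_polynomial hlt.le (mem_adjoin_simple_self F _)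
      (fun z hz => ?_) fun b hb => (hxa b hb).symm⟩
    obtain ⟨g, hg, hzg⟩ := exists_aeval_eq_of_mem_adjoin_simple
      (hx.sub (isAlgebraic_algebraMap (⟨a, ha⟩ : F))) hz
    exact ⟨g, hroots _ (hdeg ▸ hg), hzg⟩

theorem exists_lt_isAdmissible_of_transcendental (h : ∀ x ∉ F, Transcendental F x) (hF : F ≠ ⊤) :
    ∃ F' > F, IsAdmissible (integers hA F) (integers hA F') := by
  obtain ⟨x, -, hxF⟩ := SetLike.exists_of_lt hF.lt_top
  have hroots := containsRoots_of_forall_transcendental h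
  by_cases himm : ∀ a ∈ F, ∃ b ∈ F, v b = v (x - a)
  · have hlt := lt_restrictScalars_adjoin_simple hxF
    refine ⟨_, hlt, isAdmissible_integers_of_immediate hlt.le hxF (mem_adjoin_simple_self F x)
      (fun z hz => ?_) himm⟩
    obtain ⟨g, h, hzgh⟩ := (mem_adjoin_simple_iff F z).mp hz
    exact ⟨g, h, hroots _, hroots _, hzgh⟩
  · push Not at himm
    obtain ⟨a, ha, hxa⟩ := himm
    have hxaF : x - a ∉ F := fun h => hxF (sub_add_cancel x a ▸ F.add_mem h ha)
    have hlt := lt_restrictScalars_adjoin_simple hxaF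
    exact ⟨_, hlt, isAdmissible_integers_of_rational hlt.le (mem_adjoin_simple_self F _)
      (fun z hz => (mem_adjoin_simple_iff F z).mp hz) (h _ hxaF) hroots
      fun b hb => (hxa b hb).symm⟩

theorem exists_lt_isAdmissible (hF : F ≠ ⊤) :
    ∃ F' > F, IsAdmissible (integers hA F) (integers hA F') := by
  by_cases h : ∃ x ∉ F, IsAlgebraic F x
  · exact exists_lt_isAdmissible_of_isAlgebraic h
  · exact exists_lt_isAdmissible_of_transcendental (by simpa [Transcendental] using h) hF

theorem isAdmissible_integers_top (F : IntermediateField K Ω) :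
    IsAdmissible (integers hA F) (integers hA (⊤ : IntermediateField K Ω)) := by
  let S := {E : IntermediateField K Ω | IsAdmissible (integers hA F) (integers hA E)}
  have hchain : ∀ c ⊆ S, IsChain (· ≤ ·) c → ∀ E ∈ c, ∃ M ∈ S, ∀ E ∈ c, E ≤ M := by
    intro c hc hchain E hE
    have : Nonempty c := ⟨⟨E, hE⟩⟩
    refine ⟨⨆ E : c, E, ?_, fun E hE => le_iSup_of_le ⟨E, hE⟩ le_rfl⟩
    rw [Set.mem_ofPred, ← iSup_integers_of_directed hchain.directed]
    exact .iSup (hchain.directed.mono_comp (g := integers hA) _ fun _ _ => integers_mono)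
      fun E => hc E.2
  obtain ⟨M, -, hM⟩ := zorn_le_nonempty₀ S hchain F (.refl _)
  obtain rfl : M = ⊤ := by_contra fun hMtop => by
    obtain ⟨E, hlt, hE⟩ := exists_lt_isAdmissible (hA := hA) hMtop
    exact hlt.not_ge (hM.le_of_ge (hM.prop.trans hE) hlt.le)
  exact hM.prop

end Exhaustion

theorem isTorsionFree_h1Cotangent_of_algEquiv {A B C : Type*} [CommRing A] [CommRing B]
    [CommRing C] [IsDomain B] [Algebra A B] [Algebra A C] (e : B ≃ₐ[A] C)
    [Module.IsTorsionFree B (H1Cotangent A B)] : Module.IsTorsionFree C (H1Cotangent A C) := by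
  let := e.toRingHom.toAlgebra
  have : IsScalarTower A B C := .of_algebraMap_eq fun a => (e.commutes a).symm
  let e' : B ≃ₐ[B] C := { e with commutes' := fun _ => rfl }
  have : IsLocalization (⊥ : Submonoid B) B := .self bot_le
  have : IsLocalization (⊥ : Submonoid B) C := IsLocalization.isLocalization_of_algEquiv ⊥ e'
  exact IsLocalizedModule.isTorsionFree (H1Cotangent.map A A B C) (⊥ : Submonoid B)

section IntegersOfFractionField

variable {R k Γ : Type*} [CommRing R] [IsDomain R] [ValuationRing R] [Field k] [Algebra R k]
  [IsFractionRing R k]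

theorem valuation_integers_of_valuationRing [LinearOrderedCommGroupWithZero Γ] {v : Valuation k Γ}
    (hle : ∀ r : R, v (algebraMap R k r) ≤ 1)
    (hunit : ∀ r : R, v (algebraMap R k r) = 1 → IsUnit r) : v.Integers R where
  hom_inj := IsFractionRing.injective R k
  map_le_one := hle
  exists_of_le_one := fun {x} hx => by
    rcases ValuationRing.isInteger_or_isInteger R x with h | ⟨s, hs⟩
    · exact h
    rcases eq_or_ne x 0 with rfl | hx0
    · exact ⟨0, map_zero _⟩
    have hvs : v (algebraMap R k s) = 1 := by
      refine (hle s).antisymm ?_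
      rw [hs, map_inv₀]
      exact (one_le_inv₀ (v.pos_iff.mpr hx0)).mpr hx
    obtain ⟨t, hst⟩ := (hunit s hvs).exists_right_inv
    refine ⟨t, ?_⟩
    rw [← inv_inv x, ← hs]
    exact eq_inv_of_mul_eq_one_right (by rw [← map_mul, hst, map_one])

theorem exists_valuation_integers (Ω : Type*) [Field Ω] [Algebra k Ω] :
    ∃ V : ValuationSubring Ω, (V.valuation.comap (algebraMap k Ω)).Integers R := by
  obtain ⟨V, hV, hlocal⟩ :=
    IsLocalRing.exists_factor_valuationRing ((algebraMap k Ω).comp (algebraMap R k))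
  refine ⟨V, valuation_integers_of_valuationRing (fun r => ?_) fun r hr => ?_⟩
  · exact (V.valuation_le_one_iff _).mpr (hV r)
  · exact hlocal.map_nonunit r ((V.valuation_eq_one_iff _).mpr hr)

end IntegersOfFractionField

section IntegersInAlgebraicClosure

variable {A B K L Ω Γ : Type*} [CommRing A] [CommRing B] [Field K] [Field L] [Field Ω]
  [Algebra A B] [Algebra A K] [Algebra A Ω] [Algebra B L] [Algebra B Ω] [Algebra K L]
  [Algebra K Ω] [Algebra L Ω] [IsScalarTower A B Ω] [IsScalarTower A K Ω] [IsScalarTower B L Ω]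
  [IsScalarTower K L Ω] [LinearOrderedCommGroupWithZero Γ] {v : Valuation Ω Γ}

theorem nonempty_algEquiv_integers (hA : ∀ a : A, v (algebraMap A Ω a) ≤ 1)
    (hB : (v.comap (algebraMap L Ω)).Integers B) :
    Nonempty (B ≃ₐ[A] integers hA (IsScalarTower.toAlgHom K L Ω).fieldRange) := by
  have hinj : Function.Injective (IsScalarTower.toAlgHom A B Ω) := by
    change Function.Injective (algebraMap B Ω)
    rw [IsScalarTower.algebraMap_eq B L Ω]
    exact (algebraMap L Ω).injective.comp hB.hom_inj
  have hrange : (IsScalarTower.toAlgHom A B Ω).range =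
      integers hA (IsScalarTower.toAlgHom K L Ω).fieldRange := by
    refine le_antisymm ?_ ?_
    · rintro _ ⟨b, rfl⟩
      have hb : algebraMap L Ω (algebraMap B L b) = algebraMap B Ω b :=
        (IsScalarTower.algebraMap_apply B L Ω b).symm
      exact ⟨⟨algebraMap B L b, hb⟩, hb ▸ hB.map_le_one b⟩
    · rintro _ ⟨⟨y, rfl⟩, hy⟩
      obtain ⟨b, rfl⟩ := hB.exists_of_le_one hy
      exact ⟨b, IsScalarTower.algebraMap_apply B L Ω b⟩
  exact ⟨(AlgEquiv.ofInjective _ hinj).trans (Subalgebra.equivOfEq _ _ hrange)⟩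

theorem isTorsionFree_h1Cotangent_integers [IsAlgClosed Ω]
    {hA : ∀ a : A, v (algebraMap A Ω a) ≤ 1} (hK : (v.comap (algebraMap K Ω)).Integers A)
    (F : IntermediateField K Ω) :
    Module.IsTorsionFree (integers hA F) (H1Cotangent A (integers hA F)) := by
  let F₀ := (IsScalarTower.toAlgHom K K Ω).fieldRange
  obtain ⟨e⟩ : Nonempty (A ≃ₐ[A] integers hA F₀) := nonempty_algEquiv_integers hA hK
  have : FormallySmooth A (integers hA F₀) := .of_equiv e
  have := (isAdmissible_integers_top (hA := hA) F₀).isTorsionFree inferInstance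
  exact (isAdmissible_integers_top F).isTorsionFree_of_isTorsionFree

theorem isTorsionFree_h1Cotangent_of_valuation_integers [IsAlgClosed Ω]
    (hA : (v.comap (algebraMap K Ω)).Integers A) (hB : (v.comap (algebraMap L Ω)).Integers B) :
    Module.IsTorsionFree B (H1Cotangent A B) := by
  have hA' (a : A) : v (algebraMap A Ω a) ≤ 1 :=
    IsScalarTower.algebraMap_apply A K Ω a ▸ hA.map_le_one a
  obtain ⟨e⟩ := nonempty_algEquiv_integers (K := K) hA' hB
  have := isTorsionFree_h1Cotangent_integers (hA := hA') hA
    (IsScalarTower.toAlgHom K L Ω).fieldRange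
  exact isTorsionFree_h1Cotangent_of_algEquiv e.symm

end IntegersInAlgebraicClosure

section UnitBall

variable {K L : Type*} [Field K] [Field L] (vK : AddValuation K (WithTop ℝ))
  (vL : AddValuation L (WithTop ℝ))

theorem valuation_integers_unitBall : vK.toValuation.Integers vK.unitBall where
  hom_inj := Subtype.val_injective
  map_le_one a := a.2
  exists_of_le_one := fun {x} hx => ⟨⟨x, hx⟩, rfl⟩

instance valuationRing_unitBall : ValuationRing vK.unitBall :=
  .of_integers vK.toValuation (valuation_integers_unitBall vK)

variable {vK vL} [Algebra K L] [Algebra vK.unitBall vL.unitBall]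
  (hcomp : ∀ x : vK.unitBall, (algebraMap vK.unitBall vL.unitBall x : L) = algebraMap K L (x : K))
include hcomp

theorem faithfulSMul_unitBall : FaithfulSMul vK.unitBall vL.unitBall := by
  refine (faithfulSMul_iff_algebraMap_injective _ _).mpr fun a b hab => Subtype.ext ?_
  exact (algebraMap K L).injective (by rw [← hcomp, ← hcomp, hab])

theorem isLocalHom_algebraMap_unitBall (hext : ∀ x : K, vL (algebraMap K L x) = vK x) :
    IsLocalHom (algebraMap vK.unitBall vL.unitBall) := by
  refine ⟨fun a ha => (valuation_integers_unitBall vK).isUnit_of_one' ?_⟩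
  have hv := (valuation_integers_unitBall vL).one_of_isUnit ha
  exact (hext a).symm.trans ((congrArg vL (hcomp a)).symm.trans hv)

end UnitBall

end H1CotangentTorsion

open H1CotangentTorsion

theorem h1Cotangent_integers_torsionFree_general {A B : Type*} [CommRing A] [IsDomain A]
    [ValuationRing A] [CommRing B] [IsDomain B] [ValuationRing B] [Algebra A B] [FaithfulSMul A B]
    [IsLocalHom (algebraMap A B)] : Module.IsTorsionFree B (Algebra.H1Cotangent A B) := by
  let K := FractionRing A
  let L := FractionRing B
  let Ω := AlgebraicClosure L
  let : Algebra K L := FractionRing.liftAlgebra A L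
  have : IsScalarTower A K L := FractionRing.isScalarTower_liftAlgebra A L
  have : IsScalarTower A K Ω := .to₁₂₄ A K L Ω
  obtain ⟨V, hB⟩ := exists_valuation_integers (R := B) (k := L) Ω
  have hcomp (a : A) :
      algebraMap K Ω (algebraMap A K a) = algebraMap L Ω (algebraMap B L (algebraMap A B a)) := by
    simp only [← IsScalarTower.algebraMap_apply]
  have hA : (V.valuation.comap (algebraMap K Ω)).Integers A := by
    refine valuation_integers_of_valuationRing (fun a => ?_) fun a ha => ?_
    · rw [Valuation.comap_apply, hcomp]
      exact hB.map_le_one _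
    · rw [Valuation.comap_apply, hcomp] at ha
      exact (hB.isUnit_of_one' ha).of_map
  exact isTorsionFree_h1Cotangent_of_valuation_integers hA hB

/-- Let `(K, v_K)` be a field with a non-trivial real-valued valuation and let
`(L, v_L)` be any field extension of `K` equipped with a real-valued valuation `v_L` extending
`v_K`.  Let `K°` and `L°` be the corresponding rings of integers, so that `L°` is a `K°`-algebra.
Then the first André–Quillen homology `H₁(𝕃_{L°/K°})` of the cotangent complex of `K° → L°` is a
torsion-free `L°`-module: no nonzero element is annihilated by a nonzero element of `L°`. -/
theorem h1Cotangent_integers_torsionFree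
    {K L : Type*} [Field K] [Field L] [Algebra K L]
    (vK : AddValuation K (WithTop ℝ)) (vL : AddValuation L (WithTop ℝ))
    (hnt : vK.IsNontrivial)
    (hext : ∀ x : K, vL (algebraMap K L x) = vK x)
    [Algebra vK.unitBall vL.unitBall]
    (hcomp : ∀ x : vK.unitBall,
      (algebraMap vK.unitBall vL.unitBall x : L) = algebraMap K L (x : K)) :
    ∀ (r : vL.unitBall) (m : Algebra.H1Cotangent vK.unitBall vL.unitBall),
      r • m = 0 → r = 0 ∨ m = 0 := by
  have := faithfulSMul_unitBall hcomp
  have := isLocalHom_algebraMap_unitBall hcomp hext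
  exact Module.isTorsionFree_iff_smul_eq_zero.mp h1Cotangent_integers_torsionFree_general
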